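/- Let s ∈ B_3^4 be an irreducible braid system of degree 3 and length 4 whose Hurwitz orbit s·B_4 is finite. Then #(s·B_4) ≤ 648. -/

import Mathlib

open FreeGroup in
/-- The braid relations on `m` strands (generators indexed 0-based by `Fin (m-1)`). -/
def braidRels (m : ℕ) : Set (FreeGroup (Fin (m - 1))) :=
  {r | ∃ i j : Fin (m - 1), (i.val + 2 ≤ j.val ∨ j.val + 2 ≤ i.val) ∧
        r = of i * of j * (of j * of i)⁻¹} ∪
  {r | ∃ i j : Fin (m - 1), (i.val + 1 = j.val ∨ j.val + 1 = i.val) ∧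
        r = of i * of j * of i * (of j * of i * of j)⁻¹}

/-- The braid group on `m` strands. -/
abbrev BraidGroup (m : ℕ) := PresentedGroup (braidRels m)

/-- The Artin generator `σ_i` (1-based index `1 ≤ i ≤ m-1`); junk value `1` out of range. -/
def braidGen (m : ℕ) (i : ℕ) : BraidGroup m :=
  if h : 1 ≤ i ∧ i ≤ m - 1 then PresentedGroup.of ⟨i - 1, by omega⟩ else 1

/-- A braid is periodic if some positive power of it is central. -/
def IsPeriodic {m : ℕ} (β : BraidGroup m) : Prop :=
  ∃ k : ℕ, 1 ≤ k ∧ β ^ k ∈ Subgroup.center (BraidGroup m)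

/-- The elementary Hurwitz move at (0-based) position `i`, as a bijection on `n`-tuples. -/
def hEquiv {G : Type*} [Group G] {n : ℕ} (i : Fin (n - 1)) : Equiv.Perm (Fin n → G) where
  toFun s := fun k =>
    if k.val = i.val then s ⟨i.val + 1, by have := i.isLt; omega⟩
    else if k.val = i.val + 1 then
      (s ⟨i.val + 1, by have := i.isLt; omega⟩)⁻¹ * s ⟨i.val, by have := i.isLt; omega⟩ *
        s ⟨i.val + 1, by have := i.isLt; omega⟩
    else s k
  invFun t := fun k =>
    if k.val = i.val then
      t ⟨i.val, by have := i.isLt; omega⟩ * t ⟨i.val + 1, by have := i.isLt; omega⟩ *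
        (t ⟨i.val, by have := i.isLt; omega⟩)⁻¹
    else if k.val = i.val + 1 then t ⟨i.val, by have := i.isLt; omega⟩
    else t k
  left_inv s := by
    funext k
    have hlt := i.isLt
    rcases k with ⟨kv, hkv⟩
    by_cases h1 : kv = i.val
    · subst h1
      simp [mul_assoc]
    · by_cases h2 : kv = i.val + 1
      · subst h2
        simp
      · simp [h1, h2]
  right_inv t := by
    funext k
    have hlt := i.isLt
    rcases k with ⟨kv, hkv⟩
    by_cases h1 : kv = i.val
    · subst h1
      simp [mul_assoc]
    · by_cases h2 : kv = i.val + 1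
      · subst h2
        simp [mul_assoc]
      · simp [h1, h2]

/-- The (right) Hurwitz action of a word in the generators `σ_1, …, σ_{n-1}` of `B_n`
on `n`-tuples of elements of a group `G`: `hurwitzAct (w₁ * w₂) s = hurwitzAct w₂ (hurwitzAct w₁ s)`. -/
def hurwitzAct {G : Type*} [Group G] {n : ℕ} (w : FreeGroup (Fin (n - 1))) (s : Fin n → G) :
    Fin n → G :=
  (MulOpposite.unop (FreeGroup.lift (fun i => MulOpposite.op (hEquiv (G := G) (n := n) i)) w)) s

/-- The Hurwitz orbit of a braid system. -/
def hurwitzOrbit {G : Type*} [Group G] {n : ℕ} (s : Fin n → G) : Set (Fin n → G) :=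
  {t | ∃ w : FreeGroup (Fin (n - 1)), hurwitzAct w s = t}

/-- The generator `σ_i` (1-based) as a word acting on length-`n` systems. -/
def genWord (n : ℕ) (i : ℕ) : FreeGroup (Fin (n - 1)) :=
  if h : 1 ≤ i ∧ i ≤ n - 1 then FreeGroup.of ⟨i - 1, by omega⟩ else 1

/-- The pure braid word `c_i = (σ_1⁻¹ ⋯ σ_{i-1}⁻¹) σ_i² (σ_{i-1} ⋯ σ_1)`. -/
def cWord (n : ℕ) (i : ℕ) : FreeGroup (Fin (n - 1)) :=
  ((List.range (i - 1)).map (fun t => (genWord n (t + 1))⁻¹)).prod *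
    genWord n i ^ 2 *
    ((List.range (i - 1)).reverse.map (fun t => genWord n (t + 1))).prod

/-- The word `Δ_{(i,j)} = (σ_i σ_{i+1} ⋯ σ_j)(σ_i ⋯ σ_{j-1}) ⋯ (σ_i σ_{i+1})(σ_i)`. -/
def deltaWord (n i j : ℕ) : FreeGroup (Fin (n - 1)) :=
  ((List.range (j - i + 1)).map (fun t =>
    ((List.range (j - t - i + 1)).map (fun u => genWord n (i + u))).prod)).prod

/-- The exponent-sum homomorphism, valued in `Multiplicative ℤ`. -/
def expSumHom {m : ℕ} : BraidGroup m →* Multiplicative ℤ :=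
  PresentedGroup.toGroup (f := fun _ => Multiplicative.ofAdd 1) (by
    rintro r (⟨i, j, -, rfl⟩ | ⟨i, j, -, rfl⟩) <;>
      simp <;> group)

/-- The exponent sum of a braid: `e(σ_i) = 1`. -/
def esum {m : ℕ} (β : BraidGroup m) : ℤ := Multiplicative.toAdd (expSumHom β)

/-- A braid system is reducible if some non-trivial partition of the index set has all
entries from the two parts commuting. -/
def IsReducible {G : Type*} [Group G] {n : ℕ} (s : Fin n → G) : Prop :=
  ∃ I : Set (Fin n), I.Nonempty ∧ Iᶜ.Nonempty ∧ ∀ i ∈ I, ∀ j ∈ Iᶜ, Commute (s i) (s j)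

/-!
The reduced Burau representation at `t = -1` maps `B₃` to `SL(2, ℤ)`. Two braids commute if their
images do, and a braid is central if its image is. So the problem moves to `SL(2, ℤ)`, where a
finite Hurwitz orbit forces the product of any two non-commuting entries (and of suitable longer
blocks) to be elliptic, i.e. of trace `-1`, `0` or `1`: full twists act on the orbit by conjugation
by such a product, and a non-elliptic element commutes with everything that one of its non-trivial
powers commutes with. Trace identities then leave two kinds of irreducible tuples, up to the
action.

* `(a, b, c, d)` agrees modulo the center with `(a, b, a, b)` where `a b a = b a b`. The orbit of
  `(a, b, a, b)` has at most `27` elements, and central factors are merely permuted along with the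
  entries, whence `27 * 4! = 648`.
* `a`, `c`, `d` lie in an abelian subgroup normalized by `b`, and `b ^ 2` is central. Each entry
  keeps its identity along the orbit up to conjugation by `b`, whence `4! * 2 ^ 4 = 384`.
-/

section Group

variable {G : Type*} [Group G] {a b : G}

theorem commute_self_mul_iff : Commute a (a * b) ↔ Commute a b := by
  simp [commute_iff_eq, mul_assoc]

theorem commute_mul_self_iff : Commute a (b * a) ↔ Commute a b := by
  simp [commute_iff_eq, ← mul_assoc]

theorem commute_inv_mul_mul_iff (g : G) :
    Commute (g⁻¹ * a * g) (g⁻¹ * b * g) ↔ Commute a b := by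
  simpa using Commute.conj_iff (a := a) (b := b) g⁻¹

theorem commute_self_inv_mul_mul_iff : Commute a (a⁻¹ * b * a) ↔ Commute a b := by
  simpa using commute_inv_mul_mul_iff (a := a) (b := b) a

theorem conj_eq_of_inv_mul_mem_center (h : a⁻¹ * b ∈ Subgroup.center G) (g : G) :
    b * g * b⁻¹ = a * g * a⁻¹ := by
  calc b * g * b⁻¹ = a * (a⁻¹ * b * g) * b⁻¹ := by group
    _ = a * (g * (a⁻¹ * b)) * b⁻¹ := by rw [Subgroup.mem_center_iff.mp h g]
    _ = a * g * a⁻¹ := by group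

theorem inv_mul_mul_eq_of_inv_mul_mem_center (h : a⁻¹ * b ∈ Subgroup.center G) (g : G) :
    b⁻¹ * g * b = a⁻¹ * g * a := by
  have h_conj := conj_eq_of_inv_mul_mem_center h (a⁻¹ * g * a)
  calc b⁻¹ * g * b = b⁻¹ * (a * (a⁻¹ * g * a) * a⁻¹) * b := by group
    _ = a⁻¹ * g * a := by rw [← h_conj]; group

theorem inv_mul_mul_mem_center_iff (g : G) :
    g⁻¹ * a * g ∈ Subgroup.center G ↔ a ∈ Subgroup.center G := by
  rw [Subgroup.Normal.mem_comm_iff inferInstance, mul_inv_cancel_left]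

end Group

open scoped MatrixGroups

namespace SLTwo

section CommRing

variable {R : Type*} [CommRing R]

/-- The trace of an element of `SL(2, R)`. -/
def trace (A : SL(2, R)) : R := Matrix.trace (A : Matrix (Fin 2) (Fin 2) R)

theorem trace_eq (A : SL(2, R)) : trace A = A 0 0 + A 1 1 := Matrix.trace_fin_two _

theorem det_eq_one (A : SL(2, R)) : A 0 0 * A 1 1 - A 0 1 * A 1 0 = 1 := by
  rw [← Matrix.det_fin_two, A.det_coe]

theorem coe_add_coe_inv (A : SL(2, R)) :
    (A : Matrix (Fin 2) (Fin 2) R) + (A⁻¹ : SL(2, R)) = trace A • 1 := by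
  ext i j
  fin_cases i <;> fin_cases j <;> simp [trace_eq, Matrix.adjugate_fin_two, add_comm]

theorem trace_one : trace (1 : SL(2, R)) = 2 := by
  simp [trace]

theorem trace_mul_comm (A B : SL(2, R)) : trace (A * B) = trace (B * A) := by
  simp only [trace, Matrix.SpecialLinearGroup.coe_mul]
  exact Matrix.trace_mul_comm _ _

theorem trace_inv (A : SL(2, R)) : trace A⁻¹ = trace A := by
  simp [trace_eq, Matrix.adjugate_fin_two, add_comm]

theorem trace_inv_mul_mul (A B : SL(2, R)) : trace (B⁻¹ * A * B) = trace A := by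
  rw [mul_assoc, trace_mul_comm, mul_inv_cancel_right]

theorem trace_mul_add_trace_mul_inv (A B : SL(2, R)) :
    trace (A * B) + trace (A * B⁻¹) = trace A * trace B := by
  simp only [trace, Matrix.SpecialLinearGroup.coe_mul, ← Matrix.trace_add, ← mul_add,
    coe_add_coe_inv, Algebra.mul_smul_comm, mul_one, Matrix.trace_smul, smul_eq_mul]
  ring

theorem trace_mul_self (A : SL(2, R)) : trace (A * A) = trace A ^ 2 - 2 := by
  have h := trace_mul_add_trace_mul_inv A A
  rw [mul_inv_cancel, trace_one] at h
  linear_combination h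

theorem trace_mul_mul_self (A B : SL(2, R)) :
    trace (A * B * A) = trace A * trace (A * B) - trace B := by
  have h := trace_mul_add_trace_mul_inv (A * B) A
  rw [trace_mul_comm (A * B) A⁻¹, inv_mul_cancel_left] at h
  linear_combination h

theorem det_coe_sub_one (A : SL(2, R)) :
    ((A : Matrix (Fin 2) (Fin 2) R) - 1).det = 2 - trace A := by
  have h := det_eq_one A
  rw [trace_eq, Matrix.det_fin_two]
  simp only [Matrix.sub_apply, Matrix.one_apply_eq, ne_eq, zero_ne_one, not_false_eq_true,
    Matrix.one_apply_ne, sub_zero, one_ne_zero]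
  linear_combination h

/-- Fricke's polynomial `x² + y² + z² - xyz` in the traces `x`, `y`, `z` of `A`, `B`, `A * B`;
it exceeds the trace of the commutator of `A` and `B` by `2`. -/
def fricke (A B : SL(2, R)) : R :=
  trace A ^ 2 + trace B ^ 2 + trace (A * B) ^ 2 - trace A * trace B * trace (A * B)

theorem trace_commutator (A B : SL(2, R)) : trace (A * B * A⁻¹ * B⁻¹) = fricke A B - 2 := by
  have h₁ := trace_mul_add_trace_mul_inv A (B * A * B⁻¹)
  have h₂ := trace_mul_add_trace_mul_inv (A * B * A) B
  have h₃ := trace_mul_self (A * B)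
  have h₄ := trace_inv_mul_mul A B⁻¹
  simp only [mul_inv_rev, inv_inv, ← mul_assoc] at h₁ h₂ h₃ h₄
  unfold fricke
  linear_combination h₁ - h₂ + h₃ + trace A * h₄ - trace B * trace_mul_mul_self A B

theorem fricke_inv_right (A B : SL(2, R)) : fricke A B⁻¹ = fricke A B := by
  have h := trace_mul_add_trace_mul_inv A B
  rw [fricke, fricke, trace_inv]
  grind

theorem fricke_comm (A B : SL(2, R)) : fricke A B = fricke B A := by
  rw [fricke, fricke, trace_mul_comm]
  ring

theorem fricke_eq_four_of_commute {A B : SL(2, R)} (h : Commute A B) : fricke A B = 4 := by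
  have h_comm := trace_commutator A B
  rw [h.mul_inv_cancel, mul_inv_cancel, trace_one] at h_comm
  linear_combination -h_comm

theorem commute_iff {A B : SL(2, R)} : Commute A B ↔
    A 0 1 * B 1 0 = A 1 0 * B 0 1 ∧
    A 0 1 * (B 0 0 - B 1 1) = B 0 1 * (A 0 0 - A 1 1) ∧
    A 1 0 * (B 0 0 - B 1 1) = B 1 0 * (A 0 0 - A 1 1) := by
  rw [commute_iff_eq, Matrix.SpecialLinearGroup.ext_iff]
  simp only [Matrix.SpecialLinearGroup.coe_mul, Matrix.mul_apply, Fin.sum_univ_two,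
    Fin.forall_fin_two]
  grind

theorem mem_center_iff {A : SL(2, R)} :
    A ∈ Subgroup.center SL(2, R) ↔ A 0 1 = 0 ∧ A 1 0 = 0 ∧ A 0 0 = A 1 1 := by
  constructor
  · intro hA
    have h (i j : Fin 2) : Matrix.scalar (Fin 2) (A 0 0) i j = A i j :=
      congrFun₂ (Matrix.SpecialLinearGroup.scalar_eq_self_of_mem_center hA 0) i j
    exact ⟨by simp [← h 0 1], by simp [← h 1 0], by simpa using h 1 1⟩
  · rintro ⟨h₀₁, h₁₀, h_diag⟩
    refine Subgroup.mem_center_iff.mpr fun B ↦ ?_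
    exact commute_iff.mpr (by simp [h₀₁, h₁₀, h_diag])

theorem trace_mul_add_trace_mul_conj {U A C : SL(2, R)} (hU : trace U ^ 2 = 1)
    (hA : trace (U * A) = 0) (hC : trace (U * C) = 0) :
    trace (A * C) + trace (A * (U⁻¹ * C * U)) + trace (A * (U * C * U⁻¹)) =
      trace A * trace C := by
  have hdet := det_eq_one U
  simp only [trace_eq, Matrix.SpecialLinearGroup.coe_mul, Matrix.SpecialLinearGroup.coe_inv,
    Matrix.adjugate_fin_two, Matrix.mul_apply, Fin.sum_univ_two, Matrix.of_apply,
    Matrix.cons_val] at hA hC hU ⊢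
  grind

-- Over the fraction field, the centralizer of a non-scalar matrix `A` is spanned by `1` and `A`.
theorem exists_smul_eq_of_notMem_center {A : SL(2, R)}
    (hA : A ∉ Subgroup.center SL(2, R)) :
    ∃ k : R, k ≠ 0 ∧ ∀ B : SL(2, R), Commute A B →
      ∃ x y : R, k • (B : Matrix (Fin 2) (Fin 2) R) = x • A + y • 1 := by
  have h_entry : A 0 1 ≠ 0 ∨ A 1 0 ≠ 0 ∨ A 0 0 - A 1 1 ≠ 0 := by
    rw [mem_center_iff] at hA
    grind
  rcases h_entry with hk | hk | hk
  · refine ⟨_, hk, fun B h ↦ ⟨B 0 1, A 0 1 * B 0 0 - B 0 1 * A 0 0, ?_⟩⟩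
    rw [commute_iff] at h
    ext i j
    fin_cases i <;> fin_cases j <;> simp <;> grind
  · refine ⟨_, hk, fun B h ↦ ⟨B 1 0, A 1 0 * B 0 0 - B 1 0 * A 0 0, ?_⟩⟩
    rw [commute_iff] at h
    ext i j
    fin_cases i <;> fin_cases j <;> simp <;> grind
  · refine ⟨_, hk, fun B h ↦ ⟨B 0 0 - B 1 1, A 0 0 * B 1 1 - B 0 0 * A 1 1, ?_⟩⟩
    rw [commute_iff] at h
    ext i j
    fin_cases i <;> fin_cases j <;> simp <;> grind

theorem coe_mul_self (A : SL(2, R)) : (A : Matrix (Fin 2) (Fin 2) R) * A =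
    trace A • (A : Matrix (Fin 2) (Fin 2) R) - 1 := by
  have h : ((A⁻¹ : SL(2, R)) : Matrix (Fin 2) (Fin 2) R) * A = 1 := by
    rw [← Matrix.SpecialLinearGroup.coe_mul, inv_mul_cancel, Matrix.SpecialLinearGroup.coe_one]
  rw [eq_sub_iff_add_eq, ← h, ← add_mul, coe_add_coe_inv, smul_one_mul]

theorem trace_mul_sq_of_mem_center (A : SL(2, R)) {Z : SL(2, R)}
    (hZ : Z ∈ Subgroup.center SL(2, R)) : trace (A * Z) ^ 2 = trace A ^ 2 := by
  have h_det := det_eq_one Z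
  rw [mem_center_iff] at hZ
  simp only [trace_eq, Matrix.SpecialLinearGroup.coe_mul, Matrix.mul_apply, Fin.sum_univ_two]
  grind

open Polynomial Chebyshev in
theorem coe_pow_succ (A : SL(2, R)) (n : ℕ) :
    ((A ^ (n + 1) : SL(2, R)) : Matrix (Fin 2) (Fin 2) R) =
      (S R n).eval (trace A) • (A : Matrix (Fin 2) (Fin 2) R) -
        (S R (n - 1)).eval (trace A) • 1 := by
  induction n with
  | zero => simp
  | succ n ih =>
    have h_rec : (S R (n + 1)).eval (trace A) =
        trace A * (S R n).eval (trace A) - (S R (n - 1)).eval (trace A) := by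
      simp [S_add_one]
    rw [pow_succ, Matrix.SpecialLinearGroup.coe_mul, ih, sub_mul, smul_mul_assoc, coe_mul_self,
      smul_one_mul]
    push_cast
    rw [h_rec, add_sub_cancel_right]
    module

end CommRing

section IsDomain

variable {R : Type*} [CommRing R] [IsDomain R] {A B C V : SL(2, R)}

theorem commute_trans (hB : B ∉ Subgroup.center SL(2, R)) (hAB : Commute A B)
    (hBC : Commute B C) : Commute A C := by
  obtain ⟨k, hk, h_span⟩ := exists_smul_eq_of_notMem_center hB
  obtain ⟨x, y, hC⟩ := h_span C hBC
  have hAB' : (A : Matrix (Fin 2) (Fin 2) R) * B = B * A := congrArg Subtype.val hAB.eq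
  have h_smul : Commute (A : Matrix (Fin 2) (Fin 2) R) (k • (C : Matrix (Fin 2) (Fin 2) R)) := by
    rw [hC]
    exact (Commute.smul_right hAB' x).add_right ((Commute.one_right _).smul_right y)
  refine Subtype.ext (smul_right_injective _ hk ?_)
  simpa only [Matrix.SpecialLinearGroup.coe_mul, mul_smul_comm, smul_mul_assoc] using h_smul.eq

theorem trace_mul_eq_zero_of_commute (hA : A ∉ Subgroup.center SL(2, R)) (hAB : Commute A B)
    (hV : trace V = 0) (hVA : trace (V * A) = 0) : trace (V * B) = 0 := by
  obtain ⟨k, hk, h_span⟩ := exists_smul_eq_of_notMem_center hA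
  obtain ⟨x, y, hB⟩ := h_span B hAB
  refine (mul_eq_zero.mp ?_).resolve_left hk
  simp only [trace, Matrix.SpecialLinearGroup.coe_mul] at hV hVA ⊢
  rw [← smul_eq_mul, ← Matrix.trace_smul, ← mul_smul_comm, hB, mul_add, Matrix.trace_add,
    mul_smul_comm, mul_smul_comm, Matrix.trace_smul, Matrix.trace_smul, hVA, mul_one, hV]
  simp

theorem inv_mul_mem_center_of_trace_eq_zero {U : SL(2, R)} (hU : trace U ≠ 0)
    (hA : trace (U * A) = 0) (hB : trace (U * B) = 0) (hAB : Commute A B) :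
    A⁻¹ * B ∈ Subgroup.center SL(2, R) := by
  by_contra h_center
  refine hU ?_
  have h_comm : Commute (A⁻¹ * B) A⁻¹ :=
    ((Commute.refl A).inv_left.mul_left hAB.symm).inv_right
  have h := trace_mul_eq_zero_of_commute h_center h_comm hA (by simpa [mul_assoc] using hB)
  rwa [mul_inv_cancel_right] at h

open Polynomial Chebyshev in
theorem pow_succ_mem_center_iff {n : ℕ} : A ^ (n + 1) ∈ Subgroup.center SL(2, R) ↔
    (S R n).eval (trace A) = 0 ∨ A ∈ Subgroup.center SL(2, R) := by
  have h_entry (i j : Fin 2) := congrFun₂ (coe_pow_succ A n) i j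
  simp only [mem_center_iff, h_entry, Matrix.sub_apply, Matrix.smul_apply, smul_eq_mul, ne_eq,
    zero_ne_one, not_false_eq_true, Matrix.one_apply_ne, mul_zero, sub_zero, mul_eq_zero,
    one_ne_zero, Matrix.one_apply_eq, mul_one, sub_left_inj, mul_eq_mul_left_iff]
  tauto

theorem sq_mem_center (hA : trace A = 0) : A ^ 2 ∈ Subgroup.center SL(2, R) :=
  pow_succ_mem_center_iff.mpr (.inl (by simp [hA]))

theorem pow_three_mem_center (hA : trace A ^ 2 = 1) : A ^ 3 ∈ Subgroup.center SL(2, R) :=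
  pow_succ_mem_center_iff.mpr (.inl (by simp [Polynomial.Chebyshev.S_two, hA]))

theorem fricke_eq_four_or_of_commute_conj {P U : SL(2, R)} (h : Commute P (U⁻¹ * P * U)) :
    fricke P U = 4 ∨ fricke P U = trace P ^ 2 := by
  have h_fricke := fricke_eq_four_of_commute h
  have h_trace := trace_mul_add_trace_mul_inv P (U⁻¹ * P * U)
  have h_comm := trace_commutator P U⁻¹
  simp only [fricke_inv_right, inv_inv] at h_comm
  rw [fricke, trace_inv_mul_mul] at h_fricke
  simp only [mul_inv_rev, inv_inv, ← mul_assoc, trace_inv_mul_mul] at h_trace h_fricke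
  rw [h_comm] at h_trace
  have h_prod : (fricke P U - 4) * (fricke P U - trace P ^ 2) = 0 := by grind
  rcases mul_eq_zero.mp h_prod with h₁ | h₂
  · exact .inl (sub_eq_zero.mp h₁)
  · exact .inr (sub_eq_zero.mp h₂)

end IsDomain

section LinearOrder

variable {R : Type*} [CommRing R] [LinearOrder R] {A B : SL(2, R)}

/-- Elliptic elements of `SL(2, R)`, those with `|trace A| < 2`. -/
def IsElliptic (A : SL(2, R)) : Prop := trace A ^ 2 < 4

theorem IsElliptic.notMem_center (hA : IsElliptic A) : A ∉ Subgroup.center SL(2, R) := by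
  intro h
  have h_det := det_eq_one A
  rw [mem_center_iff] at h
  have h_four : trace A ^ 2 = 4 := by grind [trace_eq]
  exact hA.ne h_four

theorem isElliptic_mul_iff {Z : SL(2, R)} (hZ : Z ∈ Subgroup.center SL(2, R)) :
    IsElliptic (A * Z) ↔ IsElliptic A := by
  rw [IsElliptic, IsElliptic, trace_mul_sq_of_mem_center A hZ]

theorem isElliptic_inv_iff : IsElliptic A⁻¹ ↔ IsElliptic A := by
  rw [IsElliptic, IsElliptic, trace_inv]

theorem isElliptic_inv_mul_mul_iff : IsElliptic (B⁻¹ * A * B) ↔ IsElliptic A := by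
  rw [IsElliptic, IsElliptic, trace_inv_mul_mul]

variable [IsStrictOrderedRing R]

-- On trace-free matrices `N` with `trace (A * N) = 0` the form `det N` is negative definite.
theorem eq_zero_of_trace_mul_eq_zero {N : Matrix (Fin 2) (Fin 2) R} (hA : IsElliptic A)
    (hN : N.trace = 0) (hAN : ((A : Matrix (Fin 2) (Fin 2) R) * N).trace = 0)
    (h_det : 0 ≤ N.det) : N = 0 := by
  have hA_det := det_eq_one A
  rw [IsElliptic, trace_eq] at hA
  simp only [Matrix.trace_fin_two, Matrix.mul_apply, Fin.sum_univ_two, Matrix.det_fin_two] at *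
  have h_neg : A 0 1 * A 1 0 < 0 := by nlinarith [sq_nonneg (A 0 0 - A 1 1)]
  have h_form : 4 * (A 0 1 * A 1 0) * (N 0 0 * N 1 1 - N 0 1 * N 1 0) =
      (2 * A 0 1 * N 1 0 + (A 0 0 - A 1 1) * N 0 0) ^ 2 +
        (4 - (A 0 0 + A 1 1) ^ 2) * N 0 0 ^ 2 := by grind
  have h₀₀ : N 0 0 = 0 := by
    by_contra h
    have : 0 < N 0 0 ^ 2 := by positivity
    nlinarith [sq_nonneg (2 * A 0 1 * N 1 0 + (A 0 0 - A 1 1) * N 0 0)]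
  have h₁₁ : N 1 1 = 0 := by linarith
  have h₁₀ : A 0 1 * N 1 0 = 0 := by
    rw [h₀₀, h₁₁] at h_form h_det
    nlinarith
  have h₁₀' : N 1 0 = 0 := (mul_eq_zero.mp h₁₀).resolve_left (left_ne_zero_of_mul h_neg.ne)
  have h₀₁ : A 1 0 * N 0 1 = 0 := by
    rw [h₀₀, h₁₁, h₁₀'] at hAN
    linarith
  have h₀₁' : N 0 1 = 0 := (mul_eq_zero.mp h₀₁).resolve_left (right_ne_zero_of_mul h_neg.ne)
  ext i j
  fin_cases i <;> fin_cases j <;> assumption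

theorem commute_of_fricke_le_four (hA : IsElliptic A) (h : fricke A B ≤ 4) :
    Commute A B := by
  let N : Matrix (Fin 2) (Fin 2) R := A * B - B * A
  have hN_eq : N = (A * B * A⁻¹ * B⁻¹ : SL(2, R)) * (B * A : SL(2, R)) - (B * A : SL(2, R)) := by
    rw [← Matrix.SpecialLinearGroup.coe_mul]
    simp [N, mul_assoc]
  have hN : N.trace = 0 := by
    rw [Matrix.trace_sub, Matrix.trace_mul_comm, sub_self]
  have hAN : ((A : Matrix (Fin 2) (Fin 2) R) * N).trace = 0 := by
    rw [mul_sub, Matrix.trace_sub, ← mul_assoc, ← mul_assoc, Matrix.trace_mul_comm, ← mul_assoc,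
      Matrix.trace_mul_comm, ← mul_assoc, sub_self]
  have h_det : 0 ≤ N.det := by
    rw [hN_eq, ← sub_one_mul, Matrix.det_mul, det_coe_sub_one, trace_commutator,
      Matrix.SpecialLinearGroup.det_coe]
    linarith
  exact Subtype.ext (sub_eq_zero.mp (eq_zero_of_trace_mul_eq_zero hA hN hAN h_det))

open Polynomial Chebyshev in
theorem abs_eval_S_lt {t : R} (ht : 2 ≤ |t|) (n : ℕ) :
    |(S R (n - 1)).eval t| < |(S R n).eval t| := by
  induction n with
  | zero => simp
  | succ n ih =>
    have h_rec : (S R (n + 1)).eval t = t * (S R n).eval t - (S R (n - 1)).eval t := by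
      simp [S_add_one]
    push_cast
    rw [add_sub_cancel_right, h_rec]
    have h_tri := abs_sub_abs_le_abs_sub (t * (S R n).eval t) ((S R (n - 1)).eval t)
    rw [abs_mul] at h_tri
    nlinarith [abs_nonneg ((S R n).eval t)]

theorem two_le_abs_trace_of_not_isElliptic (hA : ¬ IsElliptic A) : 2 ≤ |trace A| := by
  rw [IsElliptic, not_lt] at hA
  exact le_of_sq_le_sq (by rw [sq_abs]; linarith) (abs_nonneg _)

theorem pow_notMem_center (hA : ¬ IsElliptic A) (hA' : A ∉ Subgroup.center SL(2, R)) {n : ℕ}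
    (hn : n ≠ 0) : A ^ n ∉ Subgroup.center SL(2, R) := by
  obtain ⟨n, rfl⟩ := Nat.exists_eq_succ_of_ne_zero hn
  rw [Nat.succ_eq_add_one, pow_succ_mem_center_iff, not_or]
  have h := abs_eval_S_lt (two_le_abs_trace_of_not_isElliptic hA) n
  exact ⟨abs_pos.mp ((abs_nonneg _).trans_lt h), hA'⟩

theorem commute_of_pow_commute (hA : ¬ IsElliptic A) {n : ℕ} (hn : n ≠ 0)
    (h : Commute (A ^ n) B) : Commute A B := by
  by_cases hA' : A ∈ Subgroup.center SL(2, R)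
  · exact (Subgroup.mem_center_iff.mp hA' B).symm
  · exact commute_trans (pow_notMem_center hA hA' hn) (Commute.self_pow A n) h

theorem isElliptic_or_mem_center_of_pow_commute {W : SL(2, R)} {n : ℕ} (hn : n ≠ 0)
    (hA : Commute (W ^ n) A) (hB : Commute (W ^ n) B) (hAB : ¬ Commute A B) :
    IsElliptic W ∨ W ∈ Subgroup.center SL(2, R) := by
  by_contra! ⟨hW, hW'⟩
  exact hAB (commute_trans hW' (commute_of_pow_commute hW hn hA).symm
    (commute_of_pow_commute hW hn hB))

end LinearOrder

section Int

variable {A B C P U V : SL(2, ℤ)}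

theorem isElliptic_iff : IsElliptic A ↔ trace A = -1 ∨ trace A = 0 ∨ trace A = 1 := by
  constructor
  · intro h
    have h_lt : |trace A| < 2 := abs_lt_of_sq_lt_sq h zero_le_two
    rw [abs_lt] at h_lt
    omega
  · rintro (h | h | h) <;> simp [IsElliptic, h]

theorem IsElliptic.trace_eq_zero_or_sq (h : IsElliptic A) : trace A = 0 ∨ trace A ^ 2 = 1 := by
  grind [isElliptic_iff]

theorem commute_of_isElliptic (hA : IsElliptic A) (hB : IsElliptic B)
    (hAB : IsElliptic (A * B)) : Commute A B := by
  refine commute_of_fricke_le_four hA ?_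
  rw [fricke]
  rcases isElliptic_iff.mp hA with h | h | h <;> rcases isElliptic_iff.mp hB with h' | h' | h' <;>
    rcases isElliptic_iff.mp hAB with h'' | h'' | h'' <;> simp [h, h', h'']

theorem commute_of_isElliptic_or_mem_center (hA : IsElliptic A) (hB : IsElliptic B)
    (hAB : IsElliptic (A * B) ∨ A * B ∈ Subgroup.center SL(2, ℤ)) : Commute A B := by
  rcases hAB with hAB | hAB
  · exact commute_of_isElliptic hA hB hAB
  · exact commute_self_mul_iff.mp (Subgroup.mem_center_iff.mp hAB A)

theorem trace_sq_eq_one_of_isElliptic (hU : IsElliptic U) (hV : IsElliptic V)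
    (hUV : IsElliptic (U * V)) (h : Commute U V) :
    trace U ^ 2 = 1 ∧ trace V ^ 2 = 1 ∧ trace (U * V) = - (trace U * trace V) := by
  have h_fricke := fricke_eq_four_of_commute h
  rw [fricke] at h_fricke
  rcases isElliptic_iff.mp hU with h | h | h <;> rcases isElliptic_iff.mp hV with h' | h' | h' <;>
    rcases isElliptic_iff.mp hUV with h'' | h'' | h'' <;> simp_all

theorem inv_mul_mem_center_of_isElliptic (hU : IsElliptic U) (hV : IsElliptic V)
    (hUV : IsElliptic (U * V)) (h : Commute U V) : U⁻¹ * V ∈ Subgroup.center SL(2, ℤ) := by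
  obtain ⟨hU', hV', hUV'⟩ := trace_sq_eq_one_of_isElliptic hU hV hUV h
  have h_trace : trace (U⁻¹ * V) = 2 * (trace U * trace V) := by
    have := trace_mul_add_trace_mul_inv V U
    rw [trace_mul_comm V, trace_mul_comm V, hUV'] at this
    linarith
  have h_not : ¬ IsElliptic (U⁻¹ * V) := by
    rw [IsElliptic, h_trace, mul_pow, mul_pow, hU', hV']
    norm_num
  by_contra h_center
  refine pow_notMem_center h_not h_center three_ne_zero ?_
  rw [h.inv_left.mul_pow, inv_pow]
  exact mul_mem (inv_mem (pow_three_mem_center hU')) (pow_three_mem_center hV')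

theorem commute_of_commute_conj (hU : trace U ^ 2 = 1) (h : Commute P (U⁻¹ * P * U)) :
    Commute P U := by
  suffices h_fricke : fricke P U = 4 by
    refine (commute_of_fricke_le_four (by rw [IsElliptic, hU]; norm_num) ?_).symm
    rw [fricke_comm, h_fricke]
  rcases fricke_eq_four_or_of_commute_conj h with h_fricke | h_fricke
  · exact h_fricke
  · have h_unit : trace (P * U) * (trace P * trace U - trace (P * U)) = 1 := by
      rw [fricke] at h_fricke
      linarith
    have hP : trace P ^ 2 = 4 := by
      rcases Int.mul_eq_one_iff_eq_one_or_neg_one.mp h_unit with ⟨h₁, h₂⟩ | ⟨h₁, h₂⟩ <;> grind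
    rw [h_fricke, hP]

theorem trace_eq_zero_of_commute_conj (h : Commute C (B⁻¹ * C * B)) (hBC : ¬ Commute B C)
    (h_ell : IsElliptic (B * C)) : trace B = 0 := by
  have h_not : ¬ Commute C (B * C) := fun h ↦ hBC (commute_mul_self_iff.mp h).symm
  have h_conj : (B * C)⁻¹ * C * (B * C) = B⁻¹ * C * B := by
    calc (B * C)⁻¹ * C * (B * C) = C⁻¹ * ((B⁻¹ * C * B) * C) := by group
      _ = B⁻¹ * C * B := by rw [← h.eq, inv_mul_cancel_left]
  rw [← h_conj] at h
  rcases h_ell.trace_eq_zero_or_sq with h_trace | h_trace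
  · rcases fricke_eq_four_or_of_commute_conj h with h_fricke | h_fricke
    · rw [fricke_comm] at h_fricke
      exact absurd (commute_of_fricke_le_four h_ell h_fricke.le).symm h_not
    · have h₀ : trace (C * (B * C)) = 0 := by simpa [fricke, h_trace] using h_fricke
      have h_mul := trace_mul_add_trace_mul_inv (B * C) C
      rw [trace_mul_comm _ C, h₀, h_trace, mul_inv_cancel_right] at h_mul
      linarith
  · exact absurd (commute_of_commute_conj h_trace h) h_not

theorem exists_not_isElliptic_mul_conj (hU : trace U ^ 2 = 1) (hUA : trace (U * A) = 0)
    (hUC : trace (U * C) = 0) (hA : ¬ IsElliptic A) (hC : ¬ IsElliptic C) :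
    ¬ IsElliptic (A * C) ∨ ¬ IsElliptic (A * (U⁻¹ * C * U)) ∨
      ¬ IsElliptic (A * (U * C * U⁻¹)) := by
  by_contra! h
  have h_sum := trace_mul_add_trace_mul_conj hU hUA hUC
  have h_ge : 2 * 2 ≤ |trace A| * |trace C| :=
    mul_le_mul (two_le_abs_trace_of_not_isElliptic hA) (two_le_abs_trace_of_not_isElliptic hC)
      zero_le_two (abs_nonneg _)
  rw [← abs_mul, ← h_sum, isElliptic_iff, isElliptic_iff, isElliptic_iff] at *
  grind

end Int

end SLTwo

section HurwitzOrbit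

variable {G H : Type*} [Group G] [Group H] {n : ℕ} {s t : Fin n → G}

theorem self_mem_hurwitzOrbit (s : Fin n → G) : s ∈ hurwitzOrbit s :=
  ⟨1, by simp [hurwitzAct]⟩

theorem hEquiv_mem_hurwitzOrbit (ht : t ∈ hurwitzOrbit s) (i : Fin (n - 1)) :
    hEquiv i t ∈ hurwitzOrbit s := by
  obtain ⟨w, rfl⟩ := ht
  exact ⟨w * FreeGroup.of i, by simp [hurwitzAct]⟩

theorem hEquiv_symm_mem_hurwitzOrbit (ht : t ∈ hurwitzOrbit s) (i : Fin (n - 1)) :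
    (hEquiv i).symm t ∈ hurwitzOrbit s := by
  obtain ⟨w, rfl⟩ := ht
  exact ⟨w * (FreeGroup.of i)⁻¹, by simp [hurwitzAct]⟩

theorem hurwitzOrbit_subset {S : Set (Fin n → G)} (hs : s ∈ S)
    (h_move : ∀ i, ∀ t ∈ S, hEquiv i t ∈ S) (h_symm : ∀ i, ∀ t ∈ S, (hEquiv i).symm t ∈ S) :
    hurwitzOrbit s ⊆ S := by
  rintro t ⟨w, rfl⟩
  have hw : w ∈ Subgroup.closure (Set.range (FreeGroup.of (α := Fin (n - 1)))) := by
    rw [FreeGroup.closure_range_of]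
    exact Subgroup.mem_top w
  induction hw using Subgroup.closure_induction_right with
  | one => simpa [hurwitzAct] using hs
  | mul_right w _ _ hi ih =>
    obtain ⟨i, rfl⟩ := hi
    simpa [hurwitzAct] using h_move i _ ih
  | mul_inv_cancel w _ _ hi ih =>
    obtain ⟨i, rfl⟩ := hi
    simpa [hurwitzAct] using h_symm i _ ih

theorem mem_hurwitzOrbit_symm (ht : t ∈ hurwitzOrbit s) : s ∈ hurwitzOrbit t := by
  obtain ⟨w, rfl⟩ := ht
  exact ⟨w⁻¹, by simp [hurwitzAct]⟩

theorem hurwitzOrbit_eq_of_mem (ht : t ∈ hurwitzOrbit s) : hurwitzOrbit t = hurwitzOrbit s :=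
  have h_subset {s t : Fin n → G} (ht : t ∈ hurwitzOrbit s) : hurwitzOrbit t ⊆ hurwitzOrbit s :=
    hurwitzOrbit_subset ht (fun i _ h ↦ hEquiv_mem_hurwitzOrbit h i)
      (fun i _ h ↦ hEquiv_symm_mem_hurwitzOrbit h i)
  (h_subset ht).antisymm (h_subset (mem_hurwitzOrbit_symm ht))

theorem hurwitzOrbit_subset_of_finite {S : Set (Fin n → G)} (hS : S.Finite) (hs : s ∈ S)
    (h_move : ∀ i, ∀ t ∈ S, hEquiv i t ∈ S) : hurwitzOrbit s ⊆ S := by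
  refine hurwitzOrbit_subset hs h_move fun i t ht ↦ ?_
  have h_surj : Set.SurjOn (hEquiv i) S S :=
    ((hS.injOn_iff_bijOn_of_mapsTo (h_move i)).mp (hEquiv i).injective.injOn).surjOn
  obtain ⟨t', ht', rfl⟩ := h_surj ht
  simpa using ht'

theorem hEquiv_comp (φ : G →* H) (i : Fin (n - 1)) (t : Fin n → G) :
    hEquiv i (φ ∘ t) = φ ∘ hEquiv i t := by
  funext k
  simp only [hEquiv, Equiv.coe_fn_mk, Function.comp_apply]
  split_ifs <;> simp

theorem hEquiv_symm_comp (φ : G →* H) (i : Fin (n - 1)) (t : Fin n → G) :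
    (hEquiv i).symm (φ ∘ t) = φ ∘ (hEquiv i).symm t := by
  rw [Equiv.symm_apply_eq, hEquiv_comp, Equiv.apply_symm_apply]

theorem hurwitzOrbit_comp (φ : G →* H) (s : Fin n → G) :
    hurwitzOrbit (φ ∘ s) = (φ ∘ ·) '' hurwitzOrbit s := by
  refine (hurwitzOrbit_subset (Set.mem_image_of_mem _ (self_mem_hurwitzOrbit s)) ?_ ?_).antisymm ?_
  · rintro i _ ⟨t, ht, rfl⟩
    exact ⟨_, hEquiv_mem_hurwitzOrbit ht i, (hEquiv_comp φ i t).symm⟩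
  · rintro i _ ⟨t, ht, rfl⟩
    exact ⟨_, hEquiv_symm_mem_hurwitzOrbit ht i, (hEquiv_symm_comp φ i t).symm⟩
  · rw [Set.image_subset_iff]
    refine hurwitzOrbit_subset (self_mem_hurwitzOrbit _) (fun i t ht ↦ ?_) fun i t ht ↦ ?_
    · simpa only [Set.mem_preimage, ← hEquiv_comp] using hEquiv_mem_hurwitzOrbit ht i
    · simpa only [Set.mem_preimage, ← hEquiv_symm_comp] using hEquiv_symm_mem_hurwitzOrbit ht i

theorem exists_pow_commute_of_finite {S : Set (Fin n → G)} (hS : S.Finite)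
    (h_twist : ∀ t ∈ S, (fun i ↦ (List.ofFn t).prod⁻¹ * t i * (List.ofFn t).prod) ∈ S)
    (ht : t ∈ S) : ∃ N ≠ 0, ∀ i, Commute ((List.ofFn t).prod ^ N) (t i) := by
  set u := (List.ofFn t).prod with hu
  have h_mem (k : ℕ) : (fun i ↦ (u ^ k)⁻¹ * t i * u ^ k) ∈ S := by
    induction k with
    | zero => simpa using ht
    | succ k ih =>
      have h_prod : (List.ofFn fun i ↦ (u ^ k)⁻¹ * t i * u ^ k).prod = u := by
        have h_map := map_list_prod (MulAut.conj (u ^ k)⁻¹) (List.ofFn t)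
        rw [List.map_ofFn] at h_map
        simp only [MulAut.conj_apply, inv_inv, Function.comp_def] at h_map
        rw [← h_map, ← hu, (Commute.refl u).pow_left k |>.inv_left.eq, inv_mul_cancel_right]
      have h_step := h_twist _ ih
      rw [h_prod] at h_step
      simpa [pow_succ, mul_assoc] using h_step
  have := hS.to_subtype
  obtain ⟨k, l, hkl, h_eq⟩ := Finite.exists_ne_map_eq_of_infinite
    fun k ↦ (⟨_, h_mem k⟩ : S)
  wlog h_lt : k < l generalizing k l
  · exact this l k hkl.symm h_eq.symm (hkl.lt_or_gt.resolve_left h_lt)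
  refine ⟨l - k, by omega, fun i ↦ ?_⟩
  have h_i : (u ^ k)⁻¹ * t i * u ^ k = (u ^ l)⁻¹ * t i * u ^ l :=
    congrFun (Subtype.ext_iff.mp h_eq) i
  obtain ⟨m, rfl⟩ := Nat.exists_eq_add_of_lt h_lt
  rw [show k + m + 1 - k = m + 1 by omega]
  rw [show k + m + 1 = (m + 1) + k by omega, pow_add u (m + 1) k] at h_i
  have h_mul : u ^ (m + 1) * (t i * u ^ k) = t i * (u ^ (m + 1) * u ^ k) := by
    rw [← eq_inv_mul_iff_mul_eq]
    simpa [mul_assoc] using h_i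
  simpa only [commute_iff_eq, ← mul_assoc, mul_left_inj] using h_mul

end HurwitzOrbit

theorem eq_vec_four {α : Type*} (f : Fin 4 → α) : f = ![f 0, f 1, f 2, f 3] :=
  (FinVec.etaExpand_eq f).symm

namespace hurwitzOrbit

section Group

variable {G : Type*} [Group G] {s : Fin 4 → G} {a b c d : G}

theorem hEquiv_zero_vec (a b c d : G) :
    hEquiv (0 : Fin 3) ![a, b, c, d] = ![b, b⁻¹ * a * b, c, d] := by
  funext k
  fin_cases k <;> rfl

theorem hEquiv_one_vec (a b c d : G) :
    hEquiv (1 : Fin 3) ![a, b, c, d] = ![a, c, c⁻¹ * b * c, d] := by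
  funext k
  fin_cases k <;> rfl

theorem hEquiv_two_vec (a b c d : G) :
    hEquiv (2 : Fin 3) ![a, b, c, d] = ![a, b, d, d⁻¹ * c * d] := by
  funext k
  fin_cases k <;> rfl

theorem swap_zero (h : ![a, b, c, d] ∈ hurwitzOrbit s) :
    ![b, b⁻¹ * a * b, c, d] ∈ hurwitzOrbit s :=
  hEquiv_zero_vec a b c d ▸ hEquiv_mem_hurwitzOrbit h (0 : Fin 3)

theorem swap_one (h : ![a, b, c, d] ∈ hurwitzOrbit s) :
    ![a, c, c⁻¹ * b * c, d] ∈ hurwitzOrbit s :=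
  hEquiv_one_vec a b c d ▸ hEquiv_mem_hurwitzOrbit h (1 : Fin 3)

theorem swap_two (h : ![a, b, c, d] ∈ hurwitzOrbit s) :
    ![a, b, d, d⁻¹ * c * d] ∈ hurwitzOrbit s :=
  hEquiv_two_vec a b c d ▸ hEquiv_mem_hurwitzOrbit h (2 : Fin 3)

theorem swap_one_symm (h : ![a, b, c, d] ∈ hurwitzOrbit s) :
    ![a, b * c * b⁻¹, b, d] ∈ hurwitzOrbit s := by
  convert hEquiv_symm_mem_hurwitzOrbit h (1 : Fin 3) using 1
  funext k
  fin_cases k <;> rfl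

theorem swap_two_symm (h : ![a, b, c, d] ∈ hurwitzOrbit s) :
    ![a, b, c * d * c⁻¹, c] ∈ hurwitzOrbit s := by
  convert hEquiv_symm_mem_hurwitzOrbit h (2 : Fin 3) using 1
  funext k
  fin_cases k <;> rfl

theorem rotate (h : ![a, b, c, d] ∈ hurwitzOrbit s) :
    ![c, d, (c * d)⁻¹ * a * (c * d), (c * d)⁻¹ * b * (c * d)] ∈ hurwitzOrbit s := by
  simpa [mul_assoc] using swap_one (swap_zero (swap_two (swap_one h)))

theorem cycle_three (h : ![a, b, c, d] ∈ hurwitzOrbit s) :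
    ![c, c⁻¹ * a * c, c⁻¹ * b * c, d] ∈ hurwitzOrbit s :=
  swap_zero (swap_one h)

theorem cycle_four (h : ![a, b, c, d] ∈ hurwitzOrbit s) :
    ![d, d⁻¹ * a * d, d⁻¹ * b * d, d⁻¹ * c * d] ∈ hurwitzOrbit s :=
  cycle_three (swap_two h)

theorem twist_two (h : ![a, b, c, d] ∈ hurwitzOrbit s) :
    ![(a * b)⁻¹ * a * (a * b), (a * b)⁻¹ * b * (a * b), c, d] ∈ hurwitzOrbit s := by
  simpa [mul_assoc] using swap_zero (swap_zero h)

theorem twist_three (h : ![a, b, c, d] ∈ hurwitzOrbit s) :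
    ![(a * b * c)⁻¹ * a * (a * b * c), (a * b * c)⁻¹ * b * (a * b * c),
      (a * b * c)⁻¹ * c * (a * b * c), d] ∈ hurwitzOrbit s := by
  simpa [mul_assoc] using cycle_three (cycle_three (cycle_three h))

theorem twist_three_sq (h : ![a, b, c, d] ∈ hurwitzOrbit s) :
    ![((a * b * c) ^ 2)⁻¹ * a * (a * b * c) ^ 2, ((a * b * c) ^ 2)⁻¹ * b * (a * b * c) ^ 2,
      ((a * b * c) ^ 2)⁻¹ * c * (a * b * c) ^ 2, d] ∈ hurwitzOrbit s := by
  simpa [pow_two, mul_assoc] using twist_three (twist_three h)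

theorem twist_three_sq_mul (h : (a * b * c) ^ 3 ∈ Subgroup.center G) :
    ((a * b * c) ^ 2)⁻¹ * a * (a * b * c) ^ 2 * (((a * b * c) ^ 2)⁻¹ * b * (a * b * c) ^ 2) * d =
      a * b * c * (a * b * (a * b * c) * (a * b)⁻¹) *
        (((a * b * c) ^ 3)⁻¹ * ((a * b) ^ 3 * ((a * b)⁻¹ * (c * d)))) := by
  rw [← mul_assoc _ _⁻¹, Subgroup.mem_center_iff.mp (inv_mem h)]
  simp [pow_succ, mul_assoc]

theorem twist_four (h : ![a, b, c, d] ∈ hurwitzOrbit s) :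
    ![(a * b * c * d)⁻¹ * a * (a * b * c * d), (a * b * c * d)⁻¹ * b * (a * b * c * d),
      (a * b * c * d)⁻¹ * c * (a * b * c * d), (a * b * c * d)⁻¹ * d * (a * b * c * d)] ∈
      hurwitzOrbit s := by
  simpa [mul_assoc] using cycle_four (cycle_four (cycle_four (cycle_four h)))

theorem exists_pow_commute_two (hfin : (hurwitzOrbit s).Finite)
    (h : ![a, b, c, d] ∈ hurwitzOrbit s) :
    ∃ N ≠ 0, Commute ((a * b) ^ N) a ∧ Commute ((a * b) ^ N) b := by
  have hS : {t : Fin 2 → G | ![t 0, t 1, c, d] ∈ hurwitzOrbit s}.Finite := by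
    refine hfin.preimage fun t _ t' _ h_eq ↦ ?_
    simpa [funext_iff, Fin.forall_fin_succ] using h_eq
  obtain ⟨N, hN, h_comm⟩ := exists_pow_commute_of_finite hS (t := ![a, b])
    (fun t ht ↦ by simpa [mul_assoc] using twist_two ht) h
  exact ⟨N, hN, by simpa using h_comm 0, by simpa using h_comm 1⟩

theorem exists_pow_commute_three (hfin : (hurwitzOrbit s).Finite)
    (h : ![a, b, c, d] ∈ hurwitzOrbit s) :
    ∃ N ≠ 0, Commute ((a * b * c) ^ N) a ∧ Commute ((a * b * c) ^ N) b := by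
  have hS : {t : Fin 3 → G | ![t 0, t 1, t 2, d] ∈ hurwitzOrbit s}.Finite := by
    refine hfin.preimage fun t _ t' _ h_eq ↦ ?_
    simpa [funext_iff, Fin.forall_fin_succ] using h_eq
  obtain ⟨N, hN, h_comm⟩ := exists_pow_commute_of_finite hS (t := ![a, b, c])
    (fun t ht ↦ by simpa [mul_assoc] using twist_three ht) h
  refine ⟨N, hN, ?_, ?_⟩
  · simpa [mul_assoc] using h_comm 0
  · simpa [mul_assoc] using h_comm 1

theorem exists_pow_commute_four (hfin : (hurwitzOrbit s).Finite)
    (h : ![a, b, c, d] ∈ hurwitzOrbit s) :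
    ∃ N ≠ 0, Commute ((a * b * c * d) ^ N) a ∧ Commute ((a * b * c * d) ^ N) b := by
  obtain ⟨N, hN, h_comm⟩ := exists_pow_commute_of_finite hfin (t := ![a, b, c, d])
    (fun t ht ↦ by
      rw [eq_vec_four t] at ht
      rw [eq_vec_four (fun _ ↦ _)]
      simpa [mul_assoc] using twist_four ht) h
  refine ⟨N, hN, ?_, ?_⟩
  · simpa [mul_assoc] using h_comm 0
  · simpa [mul_assoc] using h_comm 1

end Group

section SpecialLinearGroup

open SLTwo

variable {s : Fin 4 → SL(2, ℤ)} {a b c d : SL(2, ℤ)}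

theorem isElliptic_mul (hfin : (hurwitzOrbit s).Finite) (h : ![a, b, c, d] ∈ hurwitzOrbit s)
    (hab : ¬ Commute a b) : IsElliptic (a * b) := by
  obtain ⟨N, hN, ha, -⟩ := exists_pow_commute_two hfin h
  by_contra h_ell
  exact hab (commute_self_mul_iff.mp (commute_of_pow_commute h_ell hN ha).symm)

theorem isElliptic_mul_mul_or_mem_center (hfin : (hurwitzOrbit s).Finite)
    (h : ![a, b, c, d] ∈ hurwitzOrbit s) (hab : ¬ Commute a b) :
    IsElliptic (a * b * c) ∨ a * b * c ∈ Subgroup.center SL(2, ℤ) := by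
  obtain ⟨N, hN, ha, hb⟩ := exists_pow_commute_three hfin h
  exact isElliptic_or_mem_center_of_pow_commute hN ha hb hab

theorem isElliptic_mul_mul_mul_or_mem_center (hfin : (hurwitzOrbit s).Finite)
    (h : ![a, b, c, d] ∈ hurwitzOrbit s) (hab : ¬ Commute a b) :
    IsElliptic (a * b * (c * d)) ∨ a * b * (c * d) ∈ Subgroup.center SL(2, ℤ) := by
  obtain ⟨N, hN, ha, hb⟩ := exists_pow_commute_four hfin h
  rw [← mul_assoc]
  exact isElliptic_or_mem_center_of_pow_commute hN ha hb hab

theorem commute_mul_mul (hfin : (hurwitzOrbit s).Finite) (h : ![a, b, c, d] ∈ hurwitzOrbit s)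
    (hab : ¬ Commute a b) (hcd : ¬ Commute c d) : Commute (a * b) (c * d) :=
  commute_of_isElliptic_or_mem_center (isElliptic_mul hfin h hab)
    (isElliptic_mul hfin (rotate h) hcd) (isElliptic_mul_mul_mul_or_mem_center hfin h hab)

theorem not_commute_mul (hfin : (hurwitzOrbit s).Finite) (h : ![a, b, c, d] ∈ hurwitzOrbit s)
    (hab : ¬ Commute a b) (hcd : ¬ Commute c d) : ¬ Commute (a * b) c := fun h_comm ↦
  hcd (commute_self_mul_iff.mp (commute_trans (isElliptic_mul hfin h hab).notMem_center
    h_comm.symm (commute_mul_mul hfin h hab hcd)))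

theorem not_isElliptic_two (hfin : (hurwitzOrbit s).Finite)
    (h : ![a, b, c, d] ∈ hurwitzOrbit s) (hab : ¬ Commute a b) (hcd : ¬ Commute c d) :
    ¬ IsElliptic c := fun hc ↦
  not_commute_mul hfin h hab hcd (commute_of_isElliptic_or_mem_center
    (isElliptic_mul hfin h hab) hc (isElliptic_mul_mul_or_mem_center hfin h hab))

theorem not_isElliptic_three (hfin : (hurwitzOrbit s).Finite)
    (h : ![a, b, c, d] ∈ hurwitzOrbit s) (hab : ¬ Commute a b) (hcd : ¬ Commute c d) :
    ¬ IsElliptic d :=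
  not_isElliptic_two hfin (swap_two h) hab
    fun h_comm ↦ hcd (commute_self_inv_mul_mul_iff.mp h_comm).symm

theorem not_isElliptic_zero (hfin : (hurwitzOrbit s).Finite)
    (h : ![a, b, c, d] ∈ hurwitzOrbit s) (hab : ¬ Commute a b) (hcd : ¬ Commute c d) :
    ¬ IsElliptic a := by
  have h_ell := not_isElliptic_two hfin (rotate h) hcd
    fun h_comm ↦ hab ((commute_inv_mul_mul_iff _).mp h_comm)
  rwa [isElliptic_inv_mul_mul_iff] at h_ell

theorem isElliptic_mul_mul (hfin : (hurwitzOrbit s).Finite)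
    (h : ![a, b, c, d] ∈ hurwitzOrbit s) (hab : ¬ Commute a b) (hcd : ¬ Commute c d) :
    IsElliptic (a * b * c) := by
  refine (isElliptic_mul_mul_or_mem_center hfin h hab).resolve_right fun h_center ↦ ?_
  refine not_isElliptic_two hfin h hab hcd ?_
  rw [← inv_mul_cancel_left (a * b) c, isElliptic_mul_iff h_center, isElliptic_inv_iff]
  exact isElliptic_mul hfin h hab

theorem isElliptic_mul_mul_mul (hfin : (hurwitzOrbit s).Finite)
    (h : ![a, b, c, d] ∈ hurwitzOrbit s) (hab : ¬ Commute a b) (hcd : ¬ Commute c d) :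
    IsElliptic (a * b * (c * d)) := by
  refine (isElliptic_mul_mul_mul_or_mem_center hfin h hab).resolve_right fun h_center ↦ ?_
  refine not_isElliptic_three hfin h hab hcd ?_
  rw [← mul_assoc] at h_center
  rw [← inv_mul_cancel_left (a * b * c) d, isElliptic_mul_iff h_center, isElliptic_inv_iff]
  exact isElliptic_mul_mul hfin h hab hcd

theorem trace_mul_sq_eq_one (hfin : (hurwitzOrbit s).Finite)
    (h : ![a, b, c, d] ∈ hurwitzOrbit s) (hab : ¬ Commute a b) (hcd : ¬ Commute c d) :
    trace (a * b) ^ 2 = 1 :=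
  (trace_sq_eq_one_of_isElliptic (isElliptic_mul hfin h hab)
    (isElliptic_mul hfin (rotate h) hcd) (isElliptic_mul_mul_mul hfin h hab hcd)
    (commute_mul_mul hfin h hab hcd)).1

theorem inv_mul_mul_mem_center (hfin : (hurwitzOrbit s).Finite)
    (h : ![a, b, c, d] ∈ hurwitzOrbit s) (hab : ¬ Commute a b) (hcd : ¬ Commute c d) :
    (a * b)⁻¹ * (c * d) ∈ Subgroup.center SL(2, ℤ) :=
  inv_mul_mem_center_of_isElliptic (isElliptic_mul hfin h hab)
    (isElliptic_mul hfin (rotate h) hcd) (isElliptic_mul_mul_mul hfin h hab hcd)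
    (commute_mul_mul hfin h hab hcd)

-- Otherwise `p := a * b * c` has central cube.  After twisting the first three entries by `p ^ 2`
-- and swapping the last two, the product of the first three entries is `p * (u * p * u⁻¹)` up to
-- the center, where `u := a * b`.
theorem trace_mul_mul_eq_zero (hfin : (hurwitzOrbit s).Finite)
    (h : ![a, b, c, d] ∈ hurwitzOrbit s) (hab : ¬ Commute a b) (hcd : ¬ Commute c d) :
    trace (a * b * c) = 0 := by
  have hu := trace_mul_sq_eq_one hfin h hab hcd
  have hp := isElliptic_mul_mul hfin h hab hcd
  refine hp.trace_eq_zero_or_sq.resolve_right fun hp_sq ↦ not_commute_mul hfin h hab hcd ?_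
  have hp_cube := pow_three_mem_center hp_sq
  have h_prod := isElliptic_mul_mul_or_mem_center hfin (swap_two (twist_three_sq h))
    (by simpa only [commute_inv_mul_mul_iff] using hab)
  have hz := mul_mem (inv_mem hp_cube)
    (mul_mem (pow_three_mem_center hu) (inv_mul_mul_mem_center hfin h hab hcd))
  rw [twist_three_sq_mul hp_cube, isElliptic_mul_iff hz, mul_mem_cancel_right hz] at h_prod
  have h_conj : IsElliptic (a * b * (a * b * c) * (a * b)⁻¹) := by
    rwa [← isElliptic_inv_mul_mul_iff (B := a * b), mul_assoc, inv_mul_cancel_right,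
      inv_mul_cancel_left]
  have h_comm : Commute (a * b * c) (a * b)⁻¹ :=
    commute_of_commute_conj (by rwa [trace_inv])
      (by simpa using commute_of_isElliptic_or_mem_center hp h_conj h_prod)
  exact commute_self_mul_iff.mp (Commute.inv_right_iff.mp h_comm).symm

theorem trace_mul_mul_self_eq_zero (hfin : (hurwitzOrbit s).Finite)
    (h : ![a, b, c, d] ∈ hurwitzOrbit s) (hab : ¬ Commute a b) (hcd : ¬ Commute c d) :
    trace (a * b * a) = 0 := by
  have h_trace := trace_mul_mul_eq_zero hfin (rotate h) hcd
    fun h_comm ↦ hab ((commute_inv_mul_mul_iff _).mp h_comm)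
  have h_eq : c * d * ((c * d)⁻¹ * a * (c * d)) = a * (a * b) * ((a * b)⁻¹ * (c * d)) := by group
  have h_sq := trace_mul_sq_of_mem_center (a * (a * b)) (inv_mul_mul_mem_center hfin h hab hcd)
  rw [h_eq] at h_trace
  rw [trace_mul_comm (a * b)]
  rw [h_trace] at h_sq
  simpa using h_sq.symm

theorem exists_commute_zero_two (hfin : (hurwitzOrbit s).Finite)
    (h : ![a, b, c, d] ∈ hurwitzOrbit s) (hab : ¬ Commute a b) (hcd : ¬ Commute c d) :
    ∃ c' d', ![a, b, c', d'] ∈ hurwitzOrbit s ∧ ¬ Commute c' d' ∧ Commute a c' := by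
  by_contra! h_not
  have h_ell {c' d'} (h' : ![a, b, c', d'] ∈ hurwitzOrbit s) (hcd' : ¬ Commute c' d') :
      IsElliptic (a * c') := isElliptic_mul hfin (swap_one h') (h_not c' d' h' hcd')
  have h_conj : ![a, b, (c * d)⁻¹ * c * (c * d), (c * d)⁻¹ * d * (c * d)] ∈ hurwitzOrbit s := by
    simpa [mul_assoc] using swap_two (swap_two h)
  have h_conj' : ![a, b, c * d * c * (c * d)⁻¹, c * d * d * (c * d)⁻¹] ∈ hurwitzOrbit s := by
    simpa [mul_assoc] using swap_two_symm (swap_two_symm h)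
  have h_center := inv_mul_mul_mem_center hfin h hab hcd
  have h_cases := exists_not_isElliptic_mul_conj (trace_mul_sq_eq_one hfin h hab hcd)
    (trace_mul_mul_self_eq_zero hfin h hab hcd) (trace_mul_mul_eq_zero hfin h hab hcd)
    (not_isElliptic_zero hfin h hab hcd) (not_isElliptic_two hfin h hab hcd)
  rw [← inv_mul_mul_eq_of_inv_mul_mem_center h_center,
    ← conj_eq_of_inv_mul_mem_center h_center] at h_cases
  rcases h_cases with h₀ | h₁ | h₂
  · exact h₀ (h_ell h hcd)
  · exact h₁ (h_ell h_conj (by rwa [commute_inv_mul_mul_iff]))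
  · exact h₂ (h_ell h_conj' (by rwa [Commute.conj_iff]))

theorem exists_mem_center_of_not_commute (hfin : (hurwitzOrbit s).Finite)
    (h : ![a, b, c, d] ∈ hurwitzOrbit s) (hab : ¬ Commute a b) (hcd : ¬ Commute c d) :
    ∃ c' d', ![a, b, c', d'] ∈ hurwitzOrbit s ∧
      a⁻¹ * c' ∈ Subgroup.center SL(2, ℤ) ∧ b⁻¹ * d' ∈ Subgroup.center SL(2, ℤ) ∧
      (a * b) ^ 3 ∈ Subgroup.center SL(2, ℤ) ∧ (a * b * a) ^ 2 ∈ Subgroup.center SL(2, ℤ) := by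
  obtain ⟨c', d', h', hcd', hac'⟩ := exists_commute_zero_two hfin h hab hcd
  have hu := trace_mul_sq_eq_one hfin h hab hcd
  have h_aba := trace_mul_mul_self_eq_zero hfin h hab hcd
  have h_a : a⁻¹ * c' ∈ Subgroup.center SL(2, ℤ) :=
    inv_mul_mem_center_of_trace_eq_zero (by rintro h₀; simp [h₀] at hu)
      h_aba (trace_mul_mul_eq_zero hfin h' hab hcd') hac'
  have h_b : b⁻¹ * d' = (a⁻¹ * c')⁻¹ * ((a * b)⁻¹ * (c' * d')) := by
    rw [eq_inv_mul_iff_mul_eq, ← mul_assoc, ← Subgroup.mem_center_iff.mp h_a]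
    simp [mul_assoc]
  refine ⟨c', d', h', h_a, ?_, pow_three_mem_center hu, sq_mem_center h_aba⟩
  rw [h_b]
  exact mul_mem (inv_mem h_a) (inv_mul_mul_mem_center hfin h' hab hcd')

theorem sq_mem_center_of_not_commute_one_three (hfin : (hurwitzOrbit s).Finite)
    (h_pairs : ∀ a b c d, ![a, b, c, d] ∈ hurwitzOrbit s → Commute a b ∨ Commute c d)
    (h : ![a, b, c, d] ∈ hurwitzOrbit s) (ha : a ∉ Subgroup.center SL(2, ℤ))
    (hc : c ∉ Subgroup.center SL(2, ℤ)) (hab : ¬ Commute a b) (hbd : ¬ Commute b d) :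
    b ^ 2 ∈ Subgroup.center SL(2, ℤ) ∧ Commute a c ∧ Commute a d ∧ Commute a (b⁻¹ * a * b) := by
  have hcd : Commute c d := (h_pairs _ _ _ _ h).resolve_left hab
  have ha_conj : Commute a (b * c * b⁻¹) :=
    (h_pairs _ _ _ _ (swap_one_symm h)).resolve_right hbd
  have hac : Commute a c := by
    refine (h_pairs _ _ _ _ (swap_one h)).resolve_right fun h_comm ↦ hbd ?_
    rwa [← commute_inv_mul_mul_iff c, hcd.inv_mul_cancel]
  have had : Commute a d := commute_trans hc hac hcd
  have hbc : ¬ Commute b c := fun h_comm ↦ hbd (commute_trans hc h_comm hcd)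
  have hc_conj : Commute c (b⁻¹ * c * b) := by
    have h_comm := commute_trans ha hac.symm ha_conj
    rw [← commute_inv_mul_mul_iff b] at h_comm
    simpa [mul_assoc] using h_comm.symm
  have h_ell : IsElliptic (b * c) := isElliptic_mul hfin (swap_one (swap_zero h)) hbc
  have h_conj : Commute (b⁻¹ * c * b) (b⁻¹ * a * b) := (commute_inv_mul_mul_iff b).mpr hac.symm
  refine ⟨sq_mem_center (trace_eq_zero_of_commute_conj hc_conj hbc h_ell), hac, had, ?_⟩
  exact commute_trans hc hac (commute_trans (by rwa [inv_mul_mul_mem_center_iff]) hc_conj h_conj)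

theorem exists_sq_mem_center (hfin : (hurwitzOrbit s).Finite)
    (h_pairs : ∀ a b c d, ![a, b, c, d] ∈ hurwitzOrbit s → Commute a b ∨ Commute c d)
    (h : ![a, b, c, d] ∈ hurwitzOrbit s) (ha : a ∉ Subgroup.center SL(2, ℤ))
    (hb : b ∉ Subgroup.center SL(2, ℤ)) (hc : c ∉ Subgroup.center SL(2, ℤ))
    (hd : d ∉ Subgroup.center SL(2, ℤ)) (hab : ¬ Commute a b) :
    ∃ a' b' c' d', ![a', b', c', d'] ∈ hurwitzOrbit s ∧ a' ∉ Subgroup.center SL(2, ℤ) ∧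
      b' ^ 2 ∈ Subgroup.center SL(2, ℤ) ∧
      Commute a' c' ∧ Commute a' d' ∧ Commute a' (b'⁻¹ * a' * b') := by
  by_cases hbd : Commute b d
  · have hab' : ¬ Commute b (b⁻¹ * a * b) := fun h_comm ↦
      hab (commute_self_inv_mul_mul_iff.mp h_comm).symm
    have had' : ¬ Commute (b⁻¹ * a * b) d := by
      rw [← hbd.inv_mul_cancel, commute_inv_mul_mul_iff]
      exact fun had ↦ hab (commute_trans hd had hbd.symm)
    exact ⟨_, _, _, _, swap_zero h, hb, sq_mem_center_of_not_commute_one_three hfin h_pairs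
      (swap_zero h) hb hc hab' had'⟩
  · exact ⟨_, _, _, _, h, ha,
      sq_mem_center_of_not_commute_one_three hfin h_pairs h ha hc hab hbd⟩

theorem exists_not_commute_of_not_isReducible (hs : ¬ IsReducible s) :
    ∃ a b c d, ![a, b, c, d] ∈ hurwitzOrbit s ∧ a ∉ Subgroup.center SL(2, ℤ) ∧
      b ∉ Subgroup.center SL(2, ℤ) ∧ c ∉ Subgroup.center SL(2, ℤ) ∧
      d ∉ Subgroup.center SL(2, ℤ) ∧ ¬ Commute a b := by
  have h_not (i : Fin 4) : ∃ j, ¬ Commute (s i) (s j) := by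
    by_contra! h_comm
    exact hs ⟨{i}, ⟨i, rfl⟩, ⟨i + 1, by simp⟩, by rintro _ rfl j -; exact h_comm j⟩
  have h_center (i : Fin 4) : s i ∉ Subgroup.center SL(2, ℤ) := fun hi ↦
    (h_not i).elim fun j hj ↦ hj (Subgroup.mem_center_iff.mp hi (s j)).symm
  have h_mem : ![s 0, s 1, s 2, s 3] ∈ hurwitzOrbit s := eq_vec_four s ▸ self_mem_hurwitzOrbit s
  by_cases h₀₁ : Commute (s 0) (s 1)
  · by_cases h₁₂ : Commute (s 1) (s 2)
    · by_cases h₂₃ : Commute (s 2) (s 3)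
      · have h₀₂ := commute_trans (h_center 1) h₀₁ h₁₂
        have h₀₃ := commute_trans (h_center 2) h₀₂ h₂₃
        obtain ⟨j, hj⟩ := h_not 0
        fin_cases j <;> simp_all
      · exact ⟨_, _, _, _, rotate h_mem, h_center 2, h_center 3,
          by simpa only [inv_mul_mul_mem_center_iff] using h_center 0,
          by simpa only [inv_mul_mul_mem_center_iff] using h_center 1, h₂₃⟩
    · exact ⟨_, _, _, _, swap_one (swap_zero h_mem), h_center 1, h_center 2,
        by simpa only [inv_mul_mul_mem_center_iff] using h_center 0, h_center 3, h₁₂⟩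
  · exact ⟨_, _, _, _, h_mem, h_center 0, h_center 1, h_center 2, h_center 3, h₀₁⟩

theorem exists_mem_of_not_isReducible (hs : ¬ IsReducible s) (hfin : (hurwitzOrbit s).Finite) :
    ∃ a b c d, ![a, b, c, d] ∈ hurwitzOrbit s ∧
      ((a⁻¹ * c ∈ Subgroup.center SL(2, ℤ) ∧ b⁻¹ * d ∈ Subgroup.center SL(2, ℤ) ∧
        (a * b) ^ 3 ∈ Subgroup.center SL(2, ℤ) ∧ (a * b * a) ^ 2 ∈ Subgroup.center SL(2, ℤ)) ∨
      (a ∉ Subgroup.center SL(2, ℤ) ∧ b ^ 2 ∈ Subgroup.center SL(2, ℤ) ∧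
        Commute a c ∧ Commute a d ∧ Commute a (b⁻¹ * a * b))) := by
  obtain ⟨a, b, c, d, h, ha, hb, hc, hd, hab⟩ := exists_not_commute_of_not_isReducible hs
  by_cases h_pairs : ∀ a b c d, ![a, b, c, d] ∈ hurwitzOrbit s → Commute a b ∨ Commute c d
  · obtain ⟨a', b', c', d', h', h_sq⟩ := exists_sq_mem_center hfin h_pairs h ha hb hc hd hab
    exact ⟨a', b', c', d', h', .inr h_sq⟩
  · push Not at h_pairs
    obtain ⟨a', b', c, d, h', hab', hcd⟩ := h_pairs
    obtain ⟨c', d', h'', h_mem⟩ := exists_mem_center_of_not_commute hfin h' hab' hcd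
    exact ⟨a', b', c', d', h'', .inl h_mem⟩

end SpecialLinearGroup

end hurwitzOrbit

section Counting

open Pointwise

variable {G : Type*} [Group G] {n : ℕ}

theorem prod_ofFn_hEquiv (i : Fin (n - 1)) (t : Fin n → G) :
    (List.ofFn (hEquiv i t)).prod = (List.ofFn t).prod := by
  have hi := i.isLt
  have h_split (u : Fin n → G) : (List.ofFn u).prod =
      ((List.ofFn u).take i).prod * u ⟨i, by omega⟩ * u ⟨i + 1, by omega⟩ *
        ((List.ofFn u).drop (i + 2)).prod := by
    rw [← List.prod_take_mul_prod_drop _ (i + 2), List.prod_take_succ _ _ (by simp; omega),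
      List.prod_take_succ _ _ (by simp; omega)]
    simp
  have h_take : (List.ofFn (hEquiv i t)).take i = (List.ofFn t).take i := by
    refine List.ext_getElem (by simp) fun k hk _ ↦ ?_
    have : k < i := by simp at hk; omega
    simp [hEquiv, show k ≠ i by omega, show k ≠ i + 1 by omega]
  have h_drop : (List.ofFn (hEquiv i t)).drop (i + 2) = (List.ofFn t).drop (i + 2) := by
    refine List.ext_getElem (by simp) fun k hk _ ↦ ?_
    simp [hEquiv, show i + 2 + k ≠ i by omega, show (i : ℕ) + 2 + k ≠ i + 1 by omega]
  rw [h_split, h_split t, h_take, h_drop]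
  simp [hEquiv, mul_assoc]

theorem eq_of_prod_ofFn_eq {t u : Fin n → G} (j : Fin n) (h_ne : ∀ i ≠ j, t i = u i)
    (h_prod : (List.ofFn t).prod = (List.ofFn u).prod) : t = u := by
  have h_set (v : Fin n → G) (h_ne : ∀ i ≠ j, t i = v i) :
      List.ofFn v = (List.ofFn t).set j (v j) := by
    refine List.ext_getElem (by simp) fun k hk _ ↦ ?_
    rw [List.getElem_set]
    split_ifs with h
    · simp [← h]
    · simpa using (h_ne ⟨k, by simpa using hk⟩ (by grind)).symm
  rw [h_set t fun _ _ ↦ rfl, h_set u h_ne, List.prod_set, List.prod_set, mul_left_inj,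
    mul_right_inj] at h_prod
  funext i
  by_cases hi : i = j
  · simpa [hi] using h_prod
  · exact h_ne i hi

theorem hEquiv_mul_of_mem_center (i : Fin (n - 1)) (t : Fin n → G) {z : Fin n → G}
    (hz : ∀ j, z j ∈ Subgroup.center G) :
    hEquiv i (t * z) =
      hEquiv i t * z ∘ Equiv.swap ⟨i, by omega⟩ ⟨i + 1, by omega⟩ := by
  funext k
  have h_comm (j : Fin n) (g : G) : Commute (z j) g := (Subgroup.mem_center_iff.mp (hz j) g).symm
  simp only [hEquiv, Equiv.coe_fn_mk, Pi.mul_apply, Function.comp_apply, Equiv.swap_apply_def,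
    Fin.ext_iff]
  split_ifs
  · rfl
  · have h_cancel (p q x y : G) (hx : ∀ g, Commute x g) (hy : ∀ g, Commute y g) :
        (q * y)⁻¹ * (p * x) * (q * y) = q⁻¹ * p * q * x := by
      rw [mul_inv_rev, ← mul_assoc _ q y, ← (hy _).eq, mul_assoc, mul_assoc p x, (hx q).eq]
      simp [mul_assoc]
    exact h_cancel _ _ _ _ (h_comm _) (h_comm _)
  · rfl

theorem hurwitzOrbit_mul_subset {t z : Fin n → G} (hz : ∀ j, z j ∈ Subgroup.center G)
    (ht : (hurwitzOrbit t).Finite) :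
    hurwitzOrbit (t * z) ⊆ hurwitzOrbit t * Set.range fun π : Equiv.Perm (Fin n) ↦ z ∘ π := by
  refine hurwitzOrbit_subset_of_finite (ht.mul (Set.finite_range _))
    (Set.mul_mem_mul (self_mem_hurwitzOrbit t) ⟨1, rfl⟩) ?_
  rintro i _ ⟨u, hu, _, ⟨π, rfl⟩, rfl⟩
  have h_mul := hEquiv_mul_of_mem_center i u (z := z ∘ π) fun j ↦ hz (π j)
  exact h_mul ▸ Set.mul_mem_mul (hEquiv_mem_hurwitzOrbit hu i) ⟨π * Equiv.swap _ _, rfl⟩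

theorem ncard_hurwitzOrbit_mul_le {t z : Fin n → G} (hz : ∀ j, z j ∈ Subgroup.center G)
    (ht : (hurwitzOrbit t).Finite) :
    (hurwitzOrbit (t * z)).ncard ≤ (hurwitzOrbit t).ncard * n.factorial := by
  set R := Set.range fun π : Equiv.Perm (Fin n) ↦ z ∘ π
  have hR : R.ncard ≤ n.factorial := by
    simpa [R, Set.image_univ, Fintype.card_perm] using
      Set.ncard_image_le (f := fun π : Equiv.Perm (Fin n) ↦ z ∘ π) Set.finite_univ
  calc (hurwitzOrbit (t * z)).ncard
      ≤ (hurwitzOrbit t * R).ncard :=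
        Set.ncard_le_ncard (hurwitzOrbit_mul_subset hz ht) (ht.mul (Set.finite_range _))
    _ ≤ (hurwitzOrbit t).ncard * R.ncard := Set.natCard_mul_le
    _ ≤ (hurwitzOrbit t).ncard * n.factorial := Nat.mul_le_mul_left _ hR

end Counting

section NormalizedAbelian

variable {G : Type*} [Group G] {n : ℕ}

/-- The values that an entry of a tuple in the Hurwitz orbit of `s` can take if it descends from the
entry `s k`, when `s j` normalizes an abelian subgroup `A` that contains all the other entries. For
`k ≠ j` the label `e` records whether `s k` has been conjugated by `s j`; for `k = j` the values
form the coset `s j • A`, whatever `e` is. -/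
def labelClass (A : Subgroup G) (s : Fin n → G) (j k : Fin n) (e : Bool) : Set G :=
  if k = j then {g | (s j)⁻¹ * g ∈ A} else {bif e then (s j)⁻¹ * s k * s j else s k}

/-- The tuples with the same product as `s` whose `i`-th entry descends from the entry `s (l.1 i)`
with label `l.2 i`. -/
def labelledTuples (A : Subgroup G) (s : Fin n → G) (j : Fin n)
    (l : Equiv.Perm (Fin n) × (Fin n → Bool)) : Set (Fin n → G) :=
  {t | (∀ i, t i ∈ labelClass A s j (l.1 i) (l.2 i)) ∧ (List.ofFn t).prod = (List.ofFn s).prod}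

variable {A : Subgroup G} {s : Fin n → G} {j k k' : Fin n} {e e' : Bool} {g h : G}

theorem mem_labelClass_self : g ∈ labelClass A s j j e ↔ (s j)⁻¹ * g ∈ A := by
  simp [labelClass]

theorem mem_labelClass_of_ne (hk : k ≠ j) :
    g ∈ labelClass A s j k e ↔ g = bif e then (s j)⁻¹ * s k * s j else s k := by
  simp [labelClass, hk]

theorem labelledTuples_subsingleton (l : Equiv.Perm (Fin n) × (Fin n → Bool)) :
    (labelledTuples A s j l).Subsingleton := by
  rintro t ⟨ht, ht_prod⟩ u ⟨hu, hu_prod⟩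
  refine eq_of_prod_ofFn_eq (l.1.symm j) (fun i hi ↦ ?_) (ht_prod.trans hu_prod.symm)
  have hi : l.1 i ≠ j := fun h ↦ hi (by simp [← h])
  rw [(mem_labelClass_of_ne hi).mp (ht i), (mem_labelClass_of_ne hi).mp (hu i)]

theorem self_mem_labelledTuples : s ∈ labelledTuples A s j (1, fun _ ↦ false) := by
  refine ⟨fun i ↦ ?_, rfl⟩
  by_cases hi : i = j
  · subst hi
    simp [mem_labelClass_self, A.one_mem]
  · simp [mem_labelClass_of_ne hi]

theorem mem_of_mem_labelClass (hs : ∀ k ≠ j, s k ∈ A)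
    (h_norm : ∀ x ∈ A, (s j)⁻¹ * x * s j ∈ A) (hk : k ≠ j) (hg : g ∈ labelClass A s j k e) :
    g ∈ A := by
  rw [(mem_labelClass_of_ne hk).mp hg]
  cases e
  · exact hs k hk
  · exact h_norm _ (hs k hk)

theorem exists_inv_mul_mul_mem_labelClass (hA : ∀ x ∈ A, ∀ y ∈ A, Commute x y)
    (hs : ∀ k ≠ j, s k ∈ A) (h_norm : ∀ x ∈ A, (s j)⁻¹ * x * s j ∈ A)
    (h_sq : ∀ x ∈ A, Commute (s j ^ 2) x) (hkk' : k ≠ k')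
    (hg : g ∈ labelClass A s j k e) (hh : h ∈ labelClass A s j k' e') :
    ∃ e'', h⁻¹ * g * h ∈ labelClass A s j k e'' := by
  by_cases hk : k = j
  · subst hk
    have hhA := mem_of_mem_labelClass hs h_norm hkk'.symm hh
    rw [mem_labelClass_self] at hg
    refine ⟨false, mem_labelClass_self.mpr ?_⟩
    have h_eq : (s k)⁻¹ * (h⁻¹ * g * h) = (s k)⁻¹ * h⁻¹ * s k * ((s k)⁻¹ * g) * h := by group
    exact h_eq ▸ mul_mem (mul_mem (h_norm _ (inv_mem hhA)) hg) hhA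
  have hgA := mem_of_mem_labelClass hs h_norm hk hg
  by_cases hk' : k' = j
  · subst hk'
    rw [mem_labelClass_self] at hh
    have h_conj : h⁻¹ * g * h = (s k')⁻¹ * g * s k' := by
      have h_eq : h⁻¹ * g * h =
          ((s k')⁻¹ * h)⁻¹ * ((s k')⁻¹ * g * s k') * ((s k')⁻¹ * h) := by group
      rw [h_eq, (hA _ hh _ (h_norm _ hgA)).inv_mul_cancel]
    refine ⟨!e, (mem_labelClass_of_ne hk).mpr ?_⟩
    rw [h_conj, (mem_labelClass_of_ne hk).mp hg]
    cases e
    · rfl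
    · have h_eq : (s k')⁻¹ * ((s k')⁻¹ * s k * s k') * s k' = (s k' ^ 2)⁻¹ * s k * s k' ^ 2 := by
        simp [pow_two, mul_assoc]
      exact h_eq.trans (h_sq _ (hs k hk)).inv_mul_cancel
  · have hhA := mem_of_mem_labelClass hs h_norm hk' hh
    exact ⟨e, by rwa [(hA _ hhA _ hgA).inv_mul_cancel]⟩

theorem exists_hEquiv_mem_labelledTuples (hA : ∀ x ∈ A, ∀ y ∈ A, Commute x y)
    (hs : ∀ k ≠ j, s k ∈ A) (h_norm : ∀ x ∈ A, (s j)⁻¹ * x * s j ∈ A)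
    (h_sq : ∀ x ∈ A, Commute (s j ^ 2) x) (i : Fin (n - 1)) {t : Fin n → G}
    {l : Equiv.Perm (Fin n) × (Fin n → Bool)} (ht : t ∈ labelledTuples A s j l) :
    ∃ l', hEquiv i t ∈ labelledTuples A s j l' := by
  obtain ⟨π, ε⟩ := l
  obtain ⟨ht, ht_prod⟩ := ht
  set p : Fin n := ⟨i, by omega⟩
  set q : Fin n := ⟨i + 1, by omega⟩
  have hpq : p ≠ q := by simp [p, q]
  obtain ⟨e, he⟩ := exists_inv_mul_mul_mem_labelClass hA hs h_norm h_sq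
    (fun h ↦ hpq (π.injective h)) (ht p) (ht q)
  refine ⟨(π * Equiv.swap p q, Function.update (ε ∘ Equiv.swap p q) q e), fun k ↦ ?_,
    (prod_ofFn_hEquiv i t).trans ht_prod⟩
  have h_mem : hEquiv i t k =
      if k = p then t q else if k = q then (t q)⁻¹ * t p * t q else t k := by
    simp [hEquiv, p, q, Fin.ext_iff]
  rw [h_mem]
  split_ifs with hkp hkq
  · simpa [hkp, hpq] using ht q
  · simpa [hkq] using he
  · simpa [hkp, hkq, Equiv.swap_apply_of_ne_of_ne hkp hkq] using ht k

theorem ncard_hurwitzOrbit_le_of_abelian (hA : ∀ x ∈ A, ∀ y ∈ A, Commute x y)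
    (hs : ∀ k ≠ j, s k ∈ A) (h_norm : ∀ x ∈ A, (s j)⁻¹ * x * s j ∈ A)
    (h_sq : ∀ x ∈ A, Commute (s j ^ 2) x) :
    (hurwitzOrbit s).ncard ≤ n.factorial * 2 ^ n := by
  have h_fin : (⋃ l, labelledTuples A s j l).Finite :=
    Set.finite_iUnion fun l ↦ (labelledTuples_subsingleton l).finite
  have h_subset : hurwitzOrbit s ⊆ ⋃ l, labelledTuples A s j l := by
    refine hurwitzOrbit_subset_of_finite h_fin
      (Set.mem_iUnion_of_mem _ self_mem_labelledTuples) fun i t ht ↦ ?_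
    obtain ⟨l, hl⟩ := Set.mem_iUnion.mp ht
    exact Set.mem_iUnion.mpr (exists_hEquiv_mem_labelledTuples hA hs h_norm h_sq i hl)
  calc (hurwitzOrbit s).ncard
      ≤ (⋃ l, labelledTuples A s j l).ncard := Set.ncard_le_ncard h_subset h_fin
    _ ≤ ∑ l, (labelledTuples A s j l).ncard := Set.ncard_iUnion_le_of_fintype _
    _ ≤ ∑ _ : Equiv.Perm (Fin n) × (Fin n → Bool), 1 := Finset.sum_le_sum fun l _ ↦
        (Set.ncard_le_one_iff (labelledTuples_subsingleton l).finite).mpr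
          fun ha hb ↦ labelledTuples_subsingleton l ha hb
    _ = n.factorial * 2 ^ n := by simp [Fintype.card_perm]

end NormalizedAbelian

section BraidRelation

variable {G : Type*} [Group G] {a b : G}

/-- If `a` and `b` satisfy the braid relation, these are the elements occurring as entries in the
Hurwitz orbit of `![a, b, a, b]`. -/
def braidConjugates (a b : G) : Fin 6 → G :=
  ![a, b, b⁻¹ * a * b, a⁻¹ * b * a, b⁻¹ * (b⁻¹ * a * b) * b,
    (b⁻¹ * a * b)⁻¹ * a * (b⁻¹ * a * b)]

/-- Triples `(i, j, k)` such that conjugating the `i`-th braid conjugate by the `j`-th one gives the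
`k`-th one: the diagonal and the cyclic rotations of `(0, 1, 2)`, `(1, 0, 3)`, `(2, 1, 4)` and
`(0, 2, 5)`. -/
def braidConjTriples : Finset (Fin 6 × Fin 6 × Fin 6) :=
  {(0, 0, 0), (1, 1, 1), (2, 2, 2), (0, 1, 2), (1, 2, 0), (2, 0, 1), (1, 0, 3), (0, 3, 1),
    (3, 1, 0), (2, 1, 4), (1, 4, 2), (4, 2, 1), (0, 2, 5), (2, 5, 0), (5, 0, 2)}

/-- The index tuples, with respect to `braidConjugates a b`, of the elements of the Hurwitz orbit of
`![a, b, a, b]`. -/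
def braidOrbitIndices : Finset (Fin 6 × Fin 6 × Fin 6 × Fin 6) :=
  {(0, 0, 0, 3), (0, 0, 1, 0), (0, 0, 3, 1), (0, 1, 0, 1), (0, 1, 1, 2), (0, 1, 2, 0),
    (0, 2, 0, 0), (0, 3, 1, 1), (1, 0, 1, 1), (1, 1, 1, 4), (1, 1, 2, 1), (1, 1, 4, 2),
    (1, 2, 0, 1), (1, 2, 1, 2), (1, 2, 2, 0), (1, 4, 2, 2), (2, 0, 0, 1), (2, 0, 1, 2),
    (2, 0, 2, 0), (2, 1, 2, 2), (2, 2, 0, 2), (2, 2, 2, 5), (2, 2, 5, 0), (2, 5, 0, 0),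
    (3, 1, 1, 1), (4, 2, 2, 2), (5, 0, 0, 0)}

theorem braidOrbitIndices_closed : ∀ f ∈ braidOrbitIndices,
    (∃ k, (f.1, f.2.1, k) ∈ braidConjTriples ∧
      (f.2.1, k, f.2.2.1, f.2.2.2) ∈ braidOrbitIndices) ∧
    (∃ k, (f.2.1, f.2.2.1, k) ∈ braidConjTriples ∧
      (f.1, f.2.2.1, k, f.2.2.2) ∈ braidOrbitIndices) ∧
    (∃ k, (f.2.2.1, f.2.2.2, k) ∈ braidConjTriples ∧
      (f.1, f.2.1, f.2.2.2, k) ∈ braidOrbitIndices) := by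
  decide

theorem inv_mul_mul_mul_of_braid (h : a * b * a = b * a * b) : b⁻¹ * a * b * a = a * b := by
  rw [mul_assoc, mul_assoc, inv_mul_eq_iff_eq_mul, ← mul_assoc, h, mul_assoc]

theorem braid_inv_mul_mul_left (h : a * b * a = b * a * b) :
    b⁻¹ * a * b * b * (b⁻¹ * a * b) = b * (b⁻¹ * a * b) * b := by
  calc b⁻¹ * a * b * b * (b⁻¹ * a * b) = b⁻¹ * (a * b * a) * b := by group
    _ = b * (b⁻¹ * a * b) * b := by rw [h]; group

theorem braid_inv_mul_mul_right (h : a * b * a = b * a * b) :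
    a * (b⁻¹ * a * b) * a = b⁻¹ * a * b * a * (b⁻¹ * a * b) := by
  have h_cycle := inv_mul_mul_mul_of_braid h
  calc a * (b⁻¹ * a * b) * a = a * (b⁻¹ * a * b * a) := mul_assoc _ _ _
    _ = a * b * (b⁻¹ * a * b) := by rw [h_cycle]; group
    _ = b⁻¹ * a * b * a * (b⁻¹ * a * b) := by rw [h_cycle]

theorem braidConjugates_mul (h : a * b * a = b * a * b) {i j k : Fin 6}
    (hijk : (i, j, k) ∈ braidConjTriples) :
    braidConjugates a b i * braidConjugates a b j =
      braidConjugates a b j * braidConjugates a b k := by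
  have h_def {x y : G} : x * y = y * (y⁻¹ * x * y) := by group
  have h_two := inv_mul_mul_mul_of_braid h
  have h_three := inv_mul_mul_mul_of_braid h.symm
  have h_four := inv_mul_mul_mul_of_braid (braid_inv_mul_mul_left h)
  have h_five := inv_mul_mul_mul_of_braid (braid_inv_mul_mul_right h)
  simp only [braidConjTriples, Finset.mem_insert, Finset.mem_singleton, Prod.mk.injEq] at hijk
  rcases hijk with ⟨rfl, rfl, rfl⟩ | ⟨rfl, rfl, rfl⟩ | ⟨rfl, rfl, rfl⟩ | ⟨rfl, rfl, rfl⟩ |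
    ⟨rfl, rfl, rfl⟩ | ⟨rfl, rfl, rfl⟩ | ⟨rfl, rfl, rfl⟩ | ⟨rfl, rfl, rfl⟩ | ⟨rfl, rfl, rfl⟩ |
    ⟨rfl, rfl, rfl⟩ | ⟨rfl, rfl, rfl⟩ | ⟨rfl, rfl, rfl⟩ | ⟨rfl, rfl, rfl⟩ | ⟨rfl, rfl, rfl⟩ |
    ⟨rfl, rfl, rfl⟩
  exacts [rfl, rfl, rfl, h_def, h_def.symm.trans h_two.symm, h_two, h_def,
    h_def.symm.trans h_three.symm, h_three, h_def, h_def.symm.trans h_four.symm, h_four, h_def,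
    h_def.symm.trans h_five.symm, h_five]

/-- The tuple of braid conjugates with the given indices. -/
def braidTuple (a b : G) (f : Fin 6 × Fin 6 × Fin 6 × Fin 6) : Fin 4 → G :=
  ![braidConjugates a b f.1, braidConjugates a b f.2.1, braidConjugates a b f.2.2.1,
    braidConjugates a b f.2.2.2]

theorem hEquiv_braidTuple_mem (h : a * b * a = b * a * b) (i : Fin 3) {t : Fin 4 → G}
    (ht : t ∈ braidTuple a b '' braidOrbitIndices) :
    hEquiv i t ∈ braidTuple a b '' braidOrbitIndices := by
  obtain ⟨f, hf, rfl⟩ := ht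
  obtain ⟨⟨k₀, h₀, hf₀⟩, ⟨k₁, h₁, hf₁⟩, ⟨k₂, h₂, hf₂⟩⟩ := braidOrbitIndices_closed f hf
  have h_conj {i j k : Fin 6} (hijk : (i, j, k) ∈ braidConjTriples) :
      (braidConjugates a b j)⁻¹ * braidConjugates a b i * braidConjugates a b j =
        braidConjugates a b k := by
    rw [mul_assoc, braidConjugates_mul h hijk, inv_mul_cancel_left]
  fin_cases i
  · exact ⟨_, hf₀, by simp [braidTuple, hurwitzOrbit.hEquiv_zero_vec, h_conj h₀]⟩
  · exact ⟨_, hf₁, by simp [braidTuple, hurwitzOrbit.hEquiv_one_vec, h_conj h₁]⟩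
  · exact ⟨_, hf₂, by simp [braidTuple, hurwitzOrbit.hEquiv_two_vec, h_conj h₂]⟩

theorem hurwitzOrbit_subset_of_braid (h : a * b * a = b * a * b) :
    hurwitzOrbit ![a, b, a, b] ⊆ braidTuple a b '' braidOrbitIndices :=
  hurwitzOrbit_subset_of_finite (braidOrbitIndices.finite_toSet.image _)
    ⟨(0, 1, 0, 1), by decide, rfl⟩ fun i _ ↦ hEquiv_braidTuple_mem h i

theorem ncard_hurwitzOrbit_le_of_braid (h : a * b * a = b * a * b) :
    (hurwitzOrbit ![a, b, a, b]).ncard ≤ 27 := by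
  calc (hurwitzOrbit ![a, b, a, b]).ncard
      ≤ (braidTuple a b '' braidOrbitIndices).ncard :=
        Set.ncard_le_ncard (hurwitzOrbit_subset_of_braid h) (braidOrbitIndices.finite_toSet.image _)
    _ ≤ (braidOrbitIndices : Set (Fin 6 × Fin 6 × Fin 6 × Fin 6)).ncard := Set.ncard_image_le
    _ = 27 := by rw [Set.ncard_coe_finset]; rfl

theorem exists_mem_center_braid (h_three : (a * b) ^ 3 ∈ Subgroup.center G)
    (h_sq : (a * b * a) ^ 2 ∈ Subgroup.center G) :
    ∃ z ∈ Subgroup.center G, a * (b * z) * a = b * z * a * (b * z) := by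
  set z := ((a * b) ^ 3)⁻¹ * (a * b * a) ^ 2 with hz_def
  have hz : z ∈ Subgroup.center G := mul_mem (inv_mem h_three) h_sq
  have hz_comm (g : G) : g * z = z * g := Subgroup.mem_center_iff.mp hz g
  have h_aba : a * b * a = b * a * b * z := by
    simp [hz_def, pow_succ, mul_assoc]
  refine ⟨z, hz, ?_⟩
  calc a * (b * z) * a = a * b * a * z := by simp only [mul_assoc, hz_comm a]
    _ = b * (a * b * z) * z := by rw [h_aba]; simp only [mul_assoc]
    _ = b * z * a * (b * z) := by rw [hz_comm (a * b)]; simp only [mul_assoc]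

theorem ncard_hurwitzOrbit_le_of_braid_mod_center {c d : G} (hac : a⁻¹ * c ∈ Subgroup.center G)
    (hbd : b⁻¹ * d ∈ Subgroup.center G) (h_three : (a * b) ^ 3 ∈ Subgroup.center G)
    (h_sq : (a * b * a) ^ 2 ∈ Subgroup.center G) :
    (hurwitzOrbit ![a, b, c, d]).ncard ≤ 648 := by
  obtain ⟨z, hz, h_braid⟩ := exists_mem_center_braid h_three h_sq
  have h_tuple : ![a, b, c, d] =
      ![a, b * z, a, b * z] * ![1, z⁻¹, a⁻¹ * c, z⁻¹ * (b⁻¹ * d)] := by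
    funext k
    fin_cases k <;> simp [mul_assoc]
  have h_center (k : Fin 4) : ![1, z⁻¹, a⁻¹ * c, z⁻¹ * (b⁻¹ * d)] k ∈ Subgroup.center G := by
    fin_cases k
    exacts [one_mem _, inv_mem hz, hac, mul_mem (inv_mem hz) hbd]
  have h_fin : (hurwitzOrbit ![a, b * z, a, b * z]).Finite :=
    (braidOrbitIndices.finite_toSet.image _).subset (hurwitzOrbit_subset_of_braid h_braid)
  calc (hurwitzOrbit ![a, b, c, d]).ncard
      ≤ (hurwitzOrbit ![a, b * z, a, b * z]).ncard * Nat.factorial 4 :=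
        h_tuple ▸ ncard_hurwitzOrbit_mul_le h_center h_fin
    _ ≤ 27 * Nat.factorial 4 := Nat.mul_le_mul_right _ (ncard_hurwitzOrbit_le_of_braid h_braid)
    _ = 648 := rfl

end BraidRelation

namespace BThree

/-- The Artin generator `σ₁` of the braid group on three strands. -/
def σ₁ : BraidGroup 3 := PresentedGroup.of 0

/-- The Artin generator `σ₂` of the braid group on three strands. -/
def σ₂ : BraidGroup 3 := PresentedGroup.of 1

/-- The Garside element of the braid group on three strands. -/
def Δ : BraidGroup 3 := σ₁ * σ₂ * σ₁

/-- The inverse of `σ₁ σ₂`. Together with `Δ` it generates the braid group, with defining relation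
`r ^ 3 * Δ ^ 2 = 1`. -/
def r : BraidGroup 3 := (σ₁ * σ₂)⁻¹

theorem braid : σ₁ * σ₂ * σ₁ = σ₂ * σ₁ * σ₂ := by
  rw [← mul_inv_eq_one]
  exact PresentedGroup.one_of_mem (Or.inr ⟨0, 1, by simp, rfl⟩)

theorem closure_eq_top : Subgroup.closure {σ₁, σ₂} = ⊤ := by
  rw [← PresentedGroup.closure_range_of]
  congr 1
  ext g
  simp [Fin.exists_fin_two, σ₁, σ₂, eq_comm]

theorem r_mul_Δ : r * Δ = σ₁ := by
  simp [r, Δ, mul_assoc]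

theorem Δ_mul_r : Δ * r = σ₂ := by
  rw [r, Δ, braid]
  simp [mul_assoc]

theorem r_mul_σ₁ : r * σ₁ = σ₂⁻¹ := by
  simp [r]

theorem σ₂_mul_r : σ₂ * r = σ₁⁻¹ := by
  simp [r]

theorem r_mul_σ₂_inv : r * σ₂⁻¹ = Δ⁻¹ := by
  rw [r, Δ, braid]
  simp [mul_assoc]

theorem r_pow_three : r ^ 3 = (Δ ^ 2)⁻¹ := by
  rw [eq_inv_iff_mul_eq_one]
  calc r ^ 3 * Δ ^ 2 = r * (r * (r * Δ)) * Δ := by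
        simp only [pow_succ, pow_zero, one_mul, mul_assoc]
    _ = 1 := by rw [r_mul_Δ, r_mul_σ₁, r_mul_σ₂_inv, inv_mul_cancel]

theorem Δ_sq_mem_center : Δ ^ 2 ∈ Subgroup.center (BraidGroup 3) := by
  have h_Δ : Commute (Δ ^ 2) Δ := (Commute.refl Δ).pow_left 2
  have h_r : Commute (Δ ^ 2) r := by
    rw [← Commute.inv_left_iff, ← r_pow_three]
    exact (Commute.refl r).pow_left 3
  have h_le : Subgroup.closure {σ₁, σ₂} ≤ Subgroup.centralizer {Δ ^ 2} := by
    rw [Subgroup.closure_le]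
    rintro _ (rfl | rfl) <;> rw [SetLike.mem_coe, Subgroup.mem_centralizer_singleton_iff]
    · exact r_mul_Δ ▸ (h_r.mul_right h_Δ).symm
    · exact Δ_mul_r ▸ (h_Δ.mul_right h_r).symm
  rw [closure_eq_top] at h_le
  exact Subgroup.mem_center_iff.mpr fun g ↦
    Subgroup.mem_centralizer_singleton_iff.mp (h_le (Subgroup.mem_top g))

theorem Δ_zpow_mem_center {m : ℤ} (hm : Even m) : Δ ^ m ∈ Subgroup.center (BraidGroup 3) := by
  obtain ⟨k, rfl⟩ := even_iff_exists_two_mul.mp hm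
  rw [zpow_mul]
  exact zpow_mem Δ_sq_mem_center k

/-- The braids of the form `Δ ^ m * w * r ^ k`, where `w` is a positive word in `σ₁` and `σ₂⁻¹` and
`k < 3`. Every braid is of this form: modulo the center, this is the normal form of an element of
the free product `PSL(2, ℤ)` of the groups of orders two and three generated by `Δ` and `r`. -/
def normalForms : Set (BraidGroup 3) :=
  {g | ∃ m : ℤ, ∃ w ∈ Submonoid.closure {σ₁, σ₂⁻¹}, ∃ k < 3, g = Δ ^ m * w * r ^ k}

theorem Δ_zpow_mul_mem_normalForms (l : ℤ) {g : BraidGroup 3} (hg : g ∈ normalForms) :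
    Δ ^ l * g ∈ normalForms := by
  obtain ⟨m, w, hw, k, hk, rfl⟩ := hg
  exact ⟨l + m, w, hw, k, hk, by simp only [zpow_add, mul_assoc]⟩

theorem r_mul_word_mem_normalForms {w : BraidGroup 3} (hw : w ∈ Submonoid.closure {σ₁, σ₂⁻¹})
    {k : ℕ} (hk : k < 3) : r * (w * r ^ k) ∈ normalForms := by
  induction hw using Submonoid.closure_induction_left with
  | one =>
    rcases Nat.lt_or_ge k 2 with hk' | hk'
    · exact ⟨0, 1, one_mem _, k + 1, by omega, by simp [pow_succ']⟩
    · obtain rfl : k = 2 := by omega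
      refine ⟨-2, 1, one_mem _, 0, by omega, ?_⟩
      rw [one_mul, ← pow_succ', r_pow_three]
      simp
  | mul_left x hx w hw _ =>
    rcases hx with rfl | rfl
    · refine ⟨0, σ₂⁻¹ * w, mul_mem (Submonoid.subset_closure (by simp)) hw, k, hk, ?_⟩
      rw [← r_mul_σ₁]
      simp [mul_assoc]
    · refine ⟨-1, w, hw, k, hk, ?_⟩
      rw [zpow_neg_one, ← r_mul_σ₂_inv]
      simp only [mul_assoc]

theorem r_mul_mem_normalForms {g : BraidGroup 3} (hg : g ∈ normalForms) : r * g ∈ normalForms := by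
  obtain ⟨m, w, hw, k, hk, rfl⟩ := hg
  rcases Int.even_or_odd m with hm | hm
  · have h_comm := Subgroup.mem_center_iff.mp (Δ_zpow_mem_center hm) r
    have h_eq : r * (Δ ^ m * w * r ^ k) = Δ ^ m * (r * (w * r ^ k)) := by
      simp only [← mul_assoc, h_comm]
    exact h_eq ▸ Δ_zpow_mul_mem_normalForms m (r_mul_word_mem_normalForms hw hk)
  · have h_comm := Subgroup.mem_center_iff.mp (Δ_zpow_mem_center (hm.sub_odd odd_one)) r
    refine ⟨m - 1, σ₁ * w, mul_mem (Submonoid.subset_closure (by simp)) hw, k, hk, ?_⟩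
    calc r * (Δ ^ m * w * r ^ k) = r * Δ ^ (m - 1) * Δ * w * r ^ k := by
          simp only [zpow_sub_one, mul_assoc, inv_mul_cancel_left]
      _ = Δ ^ (m - 1) * (σ₁ * w) * r ^ k := by
          rw [h_comm, mul_assoc _ r Δ, r_mul_Δ, mul_assoc _ σ₁]

theorem mem_normalForms (g : BraidGroup 3) : g ∈ normalForms := by
  have h_Δ {g : BraidGroup 3} (hg : g ∈ normalForms) : Δ * g ∈ normalForms := by
    simpa using Δ_zpow_mul_mem_normalForms 1 hg
  have hg : g ∈ Subgroup.closure {σ₁, σ₂} := closure_eq_top ▸ Subgroup.mem_top g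
  induction hg using Subgroup.closure_induction_left with
  | one => exact ⟨0, 1, one_mem _, 0, by omega, by simp⟩
  | mul_left x hx g _ ih =>
    rcases hx with rfl | rfl
    · rw [← r_mul_Δ, mul_assoc]
      exact r_mul_mem_normalForms (h_Δ ih)
    · rw [← Δ_mul_r, mul_assoc]
      exact h_Δ (r_mul_mem_normalForms ih)
  | inv_mul_cancel x hx g _ ih =>
    rcases hx with rfl | rfl
    · rw [← σ₂_mul_r, ← Δ_mul_r, mul_assoc, mul_assoc]
      exact h_Δ (r_mul_mem_normalForms (r_mul_mem_normalForms ih))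
    · rw [← r_mul_σ₁, ← r_mul_Δ, mul_assoc, mul_assoc]
      exact r_mul_mem_normalForms (r_mul_mem_normalForms (h_Δ ih))

/-- The images of `σ₁` and `σ₂` in `SL(2, ℤ)`. -/
def burauMatrix : Fin 2 → SL(2, ℤ) :=
  ![⟨!![1, 1; 0, 1], by decide⟩, ⟨!![1, 0; -1, 1], by decide⟩]

/-- The reduced Burau representation of the braid group on three strands at `t = -1`. -/
def burau : BraidGroup 3 →* SL(2, ℤ) :=
  PresentedGroup.toGroup (f := burauMatrix) (by
    rintro _ (⟨i, j, h, rfl⟩ | ⟨i, j, h, rfl⟩)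
    · have := i.isLt
      have := j.isLt
      omega
    · have h_cases : ∀ i j : Fin 2, i.val + 1 = j.val ∨ j.val + 1 = i.val →
          i = 0 ∧ j = 1 ∨ i = 1 ∧ j = 0 := by decide
      rcases h_cases i j h with ⟨rfl, rfl⟩ | ⟨rfl, rfl⟩ <;>
        simp only [map_mul, map_inv, FreeGroup.lift_apply_of] <;> decide)

theorem coe_burau_σ₁ : (burau σ₁ : Matrix (Fin 2) (Fin 2) ℤ) = !![1, 1; 0, 1] := by
  rw [burau, σ₁, PresentedGroup.toGroup.of]
  rfl

theorem coe_burau_σ₂ : (burau σ₂ : Matrix (Fin 2) (Fin 2) ℤ) = !![1, 0; -1, 1] := by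
  rw [burau, σ₂, PresentedGroup.toGroup.of]
  rfl

theorem coe_burau_Δ : (burau Δ : Matrix (Fin 2) (Fin 2) ℤ) = !![0, 1; -1, 0] := by
  simp [Δ, coe_burau_σ₁, coe_burau_σ₂]

theorem coe_burau_r : (burau r : Matrix (Fin 2) (Fin 2) ℤ) = !![1, -1; 1, 0] := by
  simp [r, coe_burau_σ₁, coe_burau_σ₂, Matrix.SpecialLinearGroup.coe_inv, Matrix.adjugate_fin_two]

theorem burau_word_entries {w : BraidGroup 3} (hw : w ∈ Submonoid.closure {σ₁, σ₂⁻¹}) :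
    0 < burau w 0 0 ∧ 0 < burau w 1 1 ∧ 0 ≤ burau w 0 1 ∧ 0 ≤ burau w 1 0 ∧
      (w = 1 ∨ 0 < burau w 0 1 + burau w 1 0) := by
  induction hw using Submonoid.closure_induction_left with
  | one => simp
  | mul_left x hx w _ ih =>
    obtain ⟨h₀₀, h₁₁, h₀₁, h₁₀, -⟩ := ih
    rcases hx with rfl | rfl
    · obtain ⟨e₀₀, e₀₁, e₁₀, e₁₁⟩ : burau (σ₁ * w) 0 0 = burau w 0 0 + burau w 1 0 ∧
          burau (σ₁ * w) 0 1 = burau w 0 1 + burau w 1 1 ∧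
          burau (σ₁ * w) 1 0 = burau w 1 0 ∧ burau (σ₁ * w) 1 1 = burau w 1 1 := by
        simp [coe_burau_σ₁, Matrix.mul_apply, Fin.sum_univ_two]
      exact ⟨by omega, by omega, by omega, by omega, Or.inr (by omega)⟩
    · obtain ⟨e₀₀, e₀₁, e₁₀, e₁₁⟩ : burau (σ₂⁻¹ * w) 0 0 = burau w 0 0 ∧
          burau (σ₂⁻¹ * w) 0 1 = burau w 0 1 ∧
          burau (σ₂⁻¹ * w) 1 0 = burau w 0 0 + burau w 1 0 ∧
          burau (σ₂⁻¹ * w) 1 1 = burau w 0 1 + burau w 1 1 := by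
        simp [coe_burau_σ₂, Matrix.mul_apply, Fin.sum_univ_two,
          Matrix.SpecialLinearGroup.coe_inv, Matrix.adjugate_fin_two]
      exact ⟨by omega, by omega, by omega, by omega, Or.inr (by omega)⟩

theorem burau_Δ_sq_mem_center : burau (Δ ^ 2) ∈ Subgroup.center SL(2, ℤ) := by
  rw [SLTwo.mem_center_iff]
  simp [coe_burau_Δ, pow_two]

theorem eq_one_of_burau_word_mem_center {w : BraidGroup 3}
    (hw : w ∈ Submonoid.closure {σ₁, σ₂⁻¹}) {e k : ℕ} (he : e < 2) (hk : k < 3)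
    (h : burau (Δ ^ e * w * r ^ k) ∈ Subgroup.center SL(2, ℤ)) : Δ ^ e * w * r ^ k = 1 := by
  suffices h_suff : e = 0 ∧ w = 1 ∧ k = 0 by
    obtain ⟨rfl, rfl, rfl⟩ := h_suff
    simp
  obtain ⟨h₀₀, h₁₁, h₀₁, h₁₀, h_word⟩ := burau_word_entries hw
  rw [SLTwo.mem_center_iff] at h
  interval_cases e <;> interval_cases k <;>
    simp only [map_mul, pow_zero, pow_one, pow_two, one_mul, mul_one,
      Matrix.SpecialLinearGroup.coe_mul, coe_burau_Δ, coe_burau_r, Matrix.mul_apply,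
      Fin.sum_univ_two, Matrix.of_apply, Matrix.cons_val', Matrix.cons_val_fin_one,
      Matrix.cons_val_zero, Matrix.cons_val_one] at h <;>
    grind

theorem mem_zpowers_of_burau_mem_center {g : BraidGroup 3}
    (hg : burau g ∈ Subgroup.center SL(2, ℤ)) : g ∈ Subgroup.zpowers (Δ ^ 2) := by
  obtain ⟨m, w, hw, k, hk, rfl⟩ := mem_normalForms g
  obtain ⟨j, e, he, rfl⟩ : ∃ (j : ℤ) (e : ℕ), e < 2 ∧ m = 2 * j + e :=
    ⟨m / 2, (m % 2).toNat, by omega, by omega⟩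
  have h_split : Δ ^ (2 * j + e) * w * r ^ k = (Δ ^ 2) ^ j * (Δ ^ e * w * r ^ k) := by
    rw [zpow_add, zpow_mul, zpow_natCast, zpow_ofNat, mul_assoc _ w, mul_assoc, mul_assoc _ w]
  rw [h_split] at hg ⊢
  rw [map_mul, map_zpow, mul_mem_cancel_left (zpow_mem burau_Δ_sq_mem_center j)] at hg
  rw [eq_one_of_burau_word_mem_center hw he hk hg, mul_one]
  exact zpow_mem (Subgroup.mem_zpowers _) j

theorem mem_center_of_burau_mem_center {g : BraidGroup 3}
    (hg : burau g ∈ Subgroup.center SL(2, ℤ)) : g ∈ Subgroup.center (BraidGroup 3) :=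
  Subgroup.zpowers_le.mpr Δ_sq_mem_center (mem_zpowers_of_burau_mem_center hg)

open scoped commutatorElement in
theorem commute_of_commute_burau {g h : BraidGroup 3} (hgh : Commute (burau g) (burau h)) :
    Commute g h := by
  have h_burau : burau ⁅g, h⁆ = 1 := by
    rw [map_commutatorElement, commutatorElement_eq_one_iff_commute]
    exact hgh
  obtain ⟨k, hk⟩ := Subgroup.mem_zpowers_iff.mp
    (mem_zpowers_of_burau_mem_center (h_burau ▸ one_mem _))
  have h_exp : expSumHom (Δ ^ 2) ^ k = 1 := by
    rw [← map_zpow, hk, map_commutatorElement, commutatorElement_eq_one_iff_mul_comm, mul_comm]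
  have h_Δ : expSumHom Δ = Multiplicative.ofAdd 3 := rfl
  have hk_zero : k = 0 := by
    rw [map_pow, h_Δ, ← ofAdd_nsmul, ← ofAdd_zsmul] at h_exp
    simpa using h_exp
  rw [← commutatorElement_eq_one_iff_commute, ← hk, hk_zero, zpow_zero]

theorem commute_trans {a b c : BraidGroup 3} (hb : burau b ∉ Subgroup.center SL(2, ℤ))
    (hab : Commute a b) (hbc : Commute b c) : Commute a c :=
  commute_of_commute_burau (SLTwo.commute_trans hb (hab.map burau) (hbc.map burau))

theorem commute_conj_of_commute {a b x : BraidGroup 3} (ha : burau a ∉ Subgroup.center SL(2, ℤ))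
    (hab : Commute a (b⁻¹ * a * b)) (hx : Commute a x) : Commute a (b⁻¹ * x * b) := by
  have h_conj : burau (b⁻¹ * a * b) ∉ Subgroup.center SL(2, ℤ) := by
    rwa [map_mul, map_mul, map_inv, inv_mul_mul_mem_center_iff]
  exact commute_trans h_conj hab ((commute_inv_mul_mul_iff b).mpr hx)

theorem ncard_hurwitzOrbit_le_of_commute {a b c d : BraidGroup 3}
    (ha : burau a ∉ Subgroup.center SL(2, ℤ)) (hb : b ^ 2 ∈ Subgroup.center (BraidGroup 3))
    (hac : Commute a c) (had : Commute a d) (hab : Commute a (b⁻¹ * a * b)) :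
    (hurwitzOrbit ![a, b, c, d]).ncard ≤ 384 := by
  have h_mem {x : BraidGroup 3} : x ∈ Subgroup.centralizer {a} ↔ Commute a x := by
    rw [Subgroup.mem_centralizer_singleton_iff, eq_comm, commute_iff_eq]
  refine ncard_hurwitzOrbit_le_of_abelian (A := Subgroup.centralizer {a}) (j := 1) ?_ ?_ ?_ ?_
  · exact fun x hx y hy ↦ commute_trans ha (h_mem.mp hx).symm (h_mem.mp hy)
  · intro k hk
    rw [h_mem]
    fin_cases k
    exacts [Commute.refl a, absurd rfl hk, hac, had]
  · exact fun x hx ↦ h_mem.mpr (commute_conj_of_commute ha hab (h_mem.mp hx))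
  · exact fun x _ ↦ (Subgroup.mem_center_iff.mp hb x).symm

theorem not_isReducible_burau_comp {n : ℕ} {s : Fin n → BraidGroup 3} (hs : ¬ IsReducible s) :
    ¬ IsReducible (burau ∘ s) := fun ⟨I, hI, hI', h⟩ ↦
  hs ⟨I, hI, hI', fun i hi j hj ↦ commute_of_commute_burau (h i hi j hj)⟩

theorem exists_burau_eq_of_mem_hurwitzOrbit {s : Fin 4 → BraidGroup 3} {a b c d : SL(2, ℤ)}
    (h : ![a, b, c, d] ∈ hurwitzOrbit (burau ∘ s)) :
    ∃ a' b' c' d', ![a', b', c', d'] ∈ hurwitzOrbit s ∧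
      burau a' = a ∧ burau b' = b ∧ burau c' = c ∧ burau d' = d := by
  rw [hurwitzOrbit_comp] at h
  obtain ⟨t, ht, h_eq⟩ := h
  exact ⟨t 0, t 1, t 2, t 3, eq_vec_four t ▸ ht, congrFun h_eq 0, congrFun h_eq 1, congrFun h_eq 2,
    congrFun h_eq 3⟩

end BThree

open BThree

/-- An irreducible degree `3`, length `4` braid system with finite
Hurwitz orbit has orbit of size at most `648`. -/
theorem hurwitzOrbit_card_le_648 (s : Fin 4 → BraidGroup 3)
    (hirr : ¬ IsReducible s)
    (hfin : (hurwitzOrbit s).Finite) :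
    (hurwitzOrbit s).ncard ≤ 648 := by
  have hfin_burau : (hurwitzOrbit (burau ∘ s)).Finite := by
    rw [hurwitzOrbit_comp]
    exact hfin.image _
  obtain ⟨_, _, _, _, h_mem, h⟩ :=
    hurwitzOrbit.exists_mem_of_not_isReducible (not_isReducible_burau_comp hirr) hfin_burau
  obtain ⟨a, b, c, d, h_orbit, rfl, rfl, rfl, rfl⟩ := exists_burau_eq_of_mem_hurwitzOrbit h_mem
  rw [← hurwitzOrbit_eq_of_mem h_orbit]
  simp only [← map_mul, ← map_inv, ← map_pow] at h
  rcases h with ⟨hac, hbd, h_three, h_sq⟩ | ⟨ha, hb, hac, had, hab⟩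
  · exact ncard_hurwitzOrbit_le_of_braid_mod_center (mem_center_of_burau_mem_center hac)
      (mem_center_of_burau_mem_center hbd) (mem_center_of_burau_mem_center h_three)
      (mem_center_of_burau_mem_center h_sq)
  · have h_le := ncard_hurwitzOrbit_le_of_commute ha (mem_center_of_burau_mem_center hb)
      (commute_of_commute_burau hac) (commute_of_commute_burau had) (commute_of_commute_burau hab)
    omega
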